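/- (Excess transfer risk for the estimated bias, ERM algorithm with exact meta-gradients.) Under bounded inputs and Lipschitz loss, assume R, L > 0, Var_m > 0 and m ≠ 0. Let h̄_T be the output of the exact-gradient meta-SGD: h^{(1)} = 0 and, for t = 1, …, T with independently sampled tasks μ_t ∼ ρ and datasets Z^{(t)} ∼ μ_t^n, h^{(t+1)} = h^{(t)} − γ ∇^{(t)} with exact meta-gradient ∇^{(t)} = −λ( w_{h^{(t)}}(Z^{(t)}) − h^{(t)} ) and h̄_T = (1/T) Σ_{t=1}^T h^{(t)}, run with γ = ‖m‖/(L R √T) and λ = R L /(Var_m √n). Then the biased ERM with bias h̄_T satisfies E[ E_n(w_{h̄_T}) ] − E_ρ ≤ 2 R L · Var_m · n^{−1/2} + ‖m‖ L R · T^{−1/2}, where the outer expectation is over the sampling of the T training tasks and datasets. -/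

import Mathlib

open MeasureTheory Real
open scoped InnerProductSpace

noncomputable section

abbrev Vec (d : ℕ) := EuclideanSpace ℝ (Fin d)
abbrev Pt (d : ℕ) := Vec d × ℝ

/-- Empirical risk of `w` on the dataset `S`. -/
def empRisk {d n : ℕ} (ℓ : ℝ → ℝ → ℝ) (S : Fin n → Pt d) (w : Vec d) : ℝ :=
  (n : ℝ)⁻¹ * ∑ k, ℓ (⟪(S k).1, w⟫_ℝ) ((S k).2)

/-- Biased regularized empirical risk. -/
def regRisk {d n : ℕ} (ℓ : ℝ → ℝ → ℝ) (lam : ℝ) (S : Fin n → Pt d)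
    (h w : Vec d) : ℝ :=
  empRisk ℓ S w + lam / 2 * ‖w - h‖ ^ 2

/-- True risk of `w` under the task distribution `μ`. -/
def trueRisk {d : ℕ} (ℓ : ℝ → ℝ → ℝ) (μ : Measure (Pt d)) (w : Vec d) : ℝ :=
  ∫ z, ℓ (⟪z.1, w⟫_ℝ) (z.2) ∂μ

/-- `u` is a subgradient of `f : ℝ → ℝ` at `a`. -/
def IsSubgradAt (f : ℝ → ℝ) (u a : ℝ) : Prop :=
  ∀ b, f a + u * (b - a) ≤ f b

/-!
The minimal regularized empirical risk is a convex function of the bias (a Moreau envelope), and the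
meta-gradient is its gradient. Online-to-batch conversion of the regret bound for gradient descent
therefore compares the average bias with the bias `m`, at which the minimal regularized risk on a
dataset of the task `μ` is at most the empirical risk of `w_μ` plus `λ / 2 * ‖w_μ - m‖ ^ 2`.

It remains to bound the generalization gap of the biased ERM by `(L R) ^ 2 / (n λ)`; the classical
stability argument loses a factor `2` here. When the data are drawn with replacement from finitely
many points, averaging subgradients at the solutions on samples of size `n + 1` gives affine
minorants of the losses, hence a lower bound on the regularized risk on samples of size `n`, whose
error is controlled by Hoeffding projections and the optimality conditions. General data follow by
letting the number of points tend to infinity.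
-/

section FiniteExpectation

open Finset
open scoped BigOperators

variable {ι V : Type*} [NormedAddCommGroup V] [InnerProductSpace ℝ V]

lemma norm_sq_le_two_mul_add (a b : V) : ‖a‖ ^ 2 ≤ 2 * (‖b‖ ^ 2 + ‖a - b‖ ^ 2) := by
  have h := parallelogram_law_with_norm ℝ b (a - b)
  rw [add_sub_cancel] at h
  nlinarith [sq_nonneg ‖b - (a - b)‖]

variable [Fintype ι] [Module ℚ≥0 V]

lemma expect_inner (f : ι → V) (y : V) : ⟪𝔼 i, f i, y⟫_ℝ = 𝔼 i, ⟪f i, y⟫_ℝ := by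
  simp [expect, ← NNRat.cast_smul_eq_nnqsmul ℝ, inner_smul_left, sum_inner]

lemma inner_expect (y : V) (f : ι → V) : ⟪y, 𝔼 i, f i⟫_ℝ = 𝔼 i, ⟪y, f i⟫_ℝ := by
  simp [expect, ← NNRat.cast_smul_eq_nnqsmul ℝ, inner_smul_right, inner_sum]

variable [Nonempty ι]

lemma expect_norm_sub_expect_sq (f : ι → V) :
    𝔼 i, ‖f i - 𝔼 j, f j‖ ^ 2 = 𝔼 i, ‖f i‖ ^ 2 - ‖𝔼 i, f i‖ ^ 2 := by
  simp_rw [norm_sub_sq_real, expect_add_distrib, expect_sub_distrib, ← mul_expect, ← expect_inner,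
    Fintype.expect_const, real_inner_self_eq_norm_sq]
  ring

lemma norm_expect_sq_le (f : ι → V) : ‖𝔼 i, f i‖ ^ 2 ≤ 𝔼 i, ‖f i‖ ^ 2 := by
  rw [← sub_nonneg, ← expect_norm_sub_expect_sq]
  exact expect_nonneg fun i _ => sq_nonneg _

lemma expect_norm_sub_expect_sq_le (f : ι → V) :
    𝔼 i, ‖f i - 𝔼 j, f j‖ ^ 2 ≤ 𝔼 i, ‖f i‖ ^ 2 := by
  rw [expect_norm_sub_expect_sq]
  exact sub_le_self _ (sq_nonneg _)

end FiniteExpectation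

section CoordMean

open Finset
open scoped BigOperators

variable {I V : Type*} [Fintype I] {n : ℕ}

lemma expect_eq_expect_insertNth [AddCommMonoid V] [Module ℚ≥0 V] (J : Fin (n + 1))
    (f : (Fin (n + 1) → I) → V) :
    𝔼 τ, f τ = 𝔼 i, 𝔼 σ : Fin n → I, f (J.insertNth i σ) := by
  rw [← expect_product', univ_product_univ]
  exact (Fintype.expect_equiv (Fin.insertNthEquiv (fun _ => I) J) _ _ fun _ => rfl).symm

lemma expect_apply_coord [AddCommMonoid V] [Module ℚ≥0 V] [Nonempty I] (j : Fin n) (g : I → V) :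
    𝔼 σ : Fin n → I, g (σ j) = 𝔼 i, g i := by
  cases n with
  | zero => exact j.elim0
  | succ n => simp [expect_eq_expect_insertNth j]

lemma expect_expect_eq_expect_insertNth [AddCommMonoid V] [Module ℚ≥0 V]
    (f : Fin (n + 1) → (Fin (n + 1) → I) → V) :
    𝔼 τ, 𝔼 J, f J τ = 𝔼 i, 𝔼 J : Fin (n + 1), 𝔼 σ : Fin n → I, f J (J.insertNth i σ) := by
  simp_rw [expect_comm (t := (univ : Finset (Fin (n + 1)))),
    fun J => expect_eq_expect_insertNth J (f J)]

variable [NormedAddCommGroup V] [Module ℚ≥0 V]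

/-- The mean of `f J` over a uniformly random index `J` and a uniformly random sample whose `J`-th
point is `i`: for a function that does not depend on `J`, its first-order Hoeffding projection
(before centering). -/
def coordMean (f : Fin (n + 1) → (Fin (n + 1) → I) → V) (i : I) : V :=
  𝔼 J : Fin (n + 1), 𝔼 σ : Fin n → I, f J (J.insertNth i σ)

lemma expect_coordMean (f : Fin (n + 1) → (Fin (n + 1) → I) → V) :
    𝔼 i, coordMean f i = 𝔼 τ, 𝔼 J, f J τ :=
  (expect_expect_eq_expect_insertNth f).symm

lemma coordMean_const [Nonempty I] (c : V) (i : I) :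
    coordMean (fun (_ : Fin (n + 1)) _ => c) i = c := by
  simp [coordMean]

lemma coordMean_removeNth [Nonempty I] (v : (Fin n → I) → V) (i : I) :
    coordMean (fun J τ => v (J.removeNth τ)) i = 𝔼 σ, v σ := by
  simp [coordMean]

lemma coordMean_sub (f g : Fin (n + 1) → (Fin (n + 1) → I) → V) (i : I) :
    coordMean (fun J τ => f J τ - g J τ) i = coordMean f i - coordMean g i := by
  simp [coordMean, expect_sub_distrib]

variable [InnerProductSpace ℝ V]

lemma expect_inner_coordMean (f : Fin (n + 1) → (Fin (n + 1) → I) → V) (b : I → V) :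
    𝔼 i, ⟪coordMean f i, b i⟫_ℝ = 𝔼 τ, 𝔼 J, ⟪f J τ, b (τ J)⟫_ℝ := by
  rw [expect_expect_eq_expect_insertNth fun J τ => ⟪f J τ, b (τ J)⟫_ℝ]
  simp only [coordMean, expect_inner, Fin.insertNth_apply_same]

variable [Nonempty I]

lemma expect_norm_coordMean_sq_le (f : Fin (n + 1) → (Fin (n + 1) → I) → V) :
    𝔼 i, ‖coordMean f i‖ ^ 2 ≤ 𝔼 τ, 𝔼 J, ‖f J τ‖ ^ 2 := by
  rw [expect_expect_eq_expect_insertNth fun J τ => ‖f J τ‖ ^ 2]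
  refine expect_le_expect fun i _ => (norm_expect_sq_le _).trans ?_
  exact expect_le_expect fun J _ => norm_expect_sq_le _

lemma expect_norm_sum_sq (b : I → V) (n : ℕ) :
    𝔼 σ : Fin n → I, ‖∑ j, b (σ j)‖ ^ 2
      = n * 𝔼 i, ‖b i‖ ^ 2 + n * (n - 1) * ‖𝔼 i, b i‖ ^ 2 := by
  induction n with
  | zero => simp
  | succ n ih =>
    have hsum : 𝔼 σ : Fin n → I, ∑ j, b (σ j) = (n : ℝ) • 𝔼 i, b i := by
      simp_rw [expect_sum_comm, expect_apply_coord]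
      simp [Nat.cast_smul_eq_nsmul]
    have hexp (i : I) (σ : Fin n → I) :
        ‖∑ j, b ((0 : Fin (n + 1)).insertNth (α := fun _ => I) i σ j)‖ ^ 2
          = ‖b i‖ ^ 2 + 2 * ⟪b i, ∑ j, b (σ j)⟫_ℝ + ‖∑ j, b (σ j)‖ ^ 2 := by
      simp [Fin.sum_univ_succ, norm_add_sq_real]
    simp_rw [expect_eq_expect_insertNth 0, hexp, expect_add_distrib, Fintype.expect_const, ih,
      ← mul_expect, ← inner_expect, hsum, ← expect_inner, inner_smul_right,
      real_inner_self_eq_norm_sq]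
    push_cast
    ring

/-- Pythagoras for the Hoeffding projection `∑ J, coordMean Y (τ J)` of `Y` onto the sums of
functions of one sample point. -/
lemma expect_norm_coordMean_sq_le_of_expect_eq_zero {Y : (Fin (n + 1) → I) → V}
    (hY : 𝔼 τ, Y τ = 0) :
    (n + 1) * 𝔼 i, ‖coordMean (fun _ => Y) i‖ ^ 2 ≤ 𝔼 τ, ‖Y τ‖ ^ 2 := by
  set b := coordMean (fun _ : Fin (n + 1) => Y) with hb
  have hmean : 𝔼 i, b i = 0 := by
    simp only [hb, expect_coordMean, Fintype.expect_const, hY]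
  have hcross : 𝔼 τ, ⟪Y τ, ∑ J, b (τ J)⟫_ℝ = (n + 1) * 𝔼 i, ‖b i‖ ^ 2 := by
    simp_rw [← real_inner_self_eq_norm_sq, inner_sum]
    rw [hb, expect_inner_coordMean, mul_expect]
    refine expect_congr rfl fun τ _ => ?_
    simpa using (Fintype.card_mul_expect fun J => ⟪Y τ, b (τ J)⟫_ℝ).symm
  have hdist : 0 ≤ 𝔼 τ, ‖Y τ - ∑ J, b (τ J)‖ ^ 2 := expect_nonneg fun τ _ => sq_nonneg _
  simp_rw [norm_sub_sq_real, expect_add_distrib, expect_sub_distrib, ← mul_expect, hcross,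
    expect_norm_sum_sq, hmean] at hdist
  push_cast at hdist
  simp only [norm_zero] at hdist
  linarith

lemma expect_norm_coordMean_sub_expect_sq_le (X : (Fin (n + 1) → I) → V) :
    (n + 1) * 𝔼 i, ‖coordMean (fun _ => X) i - 𝔼 τ, X τ‖ ^ 2
      ≤ 𝔼 τ, ‖X τ‖ ^ 2 - ‖𝔼 τ, X τ‖ ^ 2 := by
  have h := expect_norm_coordMean_sq_le_of_expect_eq_zero (Y := fun τ => X τ - 𝔼 τ', X τ')
    (by simp [expect_sub_distrib])
  rw [expect_norm_sub_expect_sq] at h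
  simpa only [coordMean_sub, coordMean_const] using h

lemma expect_norm_centered_sub_sq_le (u : Fin (n + 1) → (Fin (n + 1) → I) → V)
    (X : (Fin (n + 1) → I) → V) (v : (Fin n → I) → V) :
    𝔼 i, ‖(coordMean u i - 𝔼 k, coordMean u k) - (coordMean (fun _ => X) i - 𝔼 τ, X τ)‖ ^ 2
      ≤ 𝔼 τ, 𝔼 J, ‖u J τ - X τ - v (J.removeNth τ)‖ ^ 2 := by
  refine le_trans (le_of_eq_of_le ?_ (expect_norm_sub_expect_sq_le _))
    (expect_norm_coordMean_sq_le _)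
  refine expect_congr rfl fun i _ => congrArg (‖·‖ ^ 2) ?_
  simp_rw [coordMean_sub, coordMean_removeNth, expect_sub_distrib, expect_coordMean,
    Fintype.expect_const]
  abel

/-- The projections of `u J` and of `∑ K, u K` differ by little more than a constant, and
Hoeffding's inequality bounds the latter. -/
lemma expect_norm_sum_coordMean_sq_le (u : Fin (n + 1) → (Fin (n + 1) → I) → V)
    (v : (Fin n → I) → V) :
    𝔼 σ : Fin n → I, ‖∑ j, coordMean u (σ j)‖ ^ 2
      ≤ 2 * n * ((𝔼 τ, ‖∑ K, u K τ‖ ^ 2) / (n + 1)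
        + 𝔼 τ, 𝔼 J, ‖u J τ - ∑ K, u K τ - v (J.removeNth τ)‖ ^ 2) := by
  set X := fun τ => ∑ K, u K τ
  set μ := 𝔼 i, coordMean u i with hμ
  set a := fun i => coordMean u i - μ
  set ξ := fun i => coordMean (fun _ : Fin (n + 1) => X) i - 𝔼 τ, X τ
  have hXmean : 𝔼 τ, X τ = ((n : ℝ) + 1) • μ := by
    rw [hμ, expect_coordMean, ← Nat.cast_succ, Nat.cast_smul_eq_nsmul, smul_expect]
    exact expect_congr rfl fun τ _ => by simpa using (Fintype.card_smul_expect fun J => u J τ).symm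
  have hξ : (n + 1) * ‖μ‖ ^ 2 + 𝔼 i, ‖ξ i‖ ^ 2 ≤ (𝔼 τ, ‖X τ‖ ^ 2) / (n + 1) := by
    have h := expect_norm_coordMean_sub_expect_sq_le X
    nth_rw 2 [hXmean] at h
    rw [norm_smul, mul_pow, Real.norm_eq_abs, sq_abs] at h
    rw [le_div_iff₀ (by positivity)]
    linarith
  have ha : 𝔼 i, ‖a i‖ ^ 2 = 𝔼 i, ‖coordMean u i‖ ^ 2 - ‖μ‖ ^ 2 := expect_norm_sub_expect_sq _
  have haξ : 𝔼 i, ‖a i‖ ^ 2 ≤ 2 * (𝔼 i, ‖ξ i‖ ^ 2 + 𝔼 i, ‖a i - ξ i‖ ^ 2) := by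
    rw [← expect_add_distrib, mul_expect]
    exact expect_le_expect fun i _ => norm_sq_le_two_mul_add _ _
  calc 𝔼 σ : Fin n → I, ‖∑ j, coordMean u (σ j)‖ ^ 2
      = n * (𝔼 i, ‖a i‖ ^ 2 + n * ‖μ‖ ^ 2) := by rw [expect_norm_sum_sq, ha]; ring
    _ ≤ n * (2 * ((𝔼 τ, ‖X τ‖ ^ 2) / (n + 1)
          + 𝔼 τ, 𝔼 J, ‖u J τ - X τ - v (J.removeNth τ)‖ ^ 2)) := by
        gcongr
        nlinarith [sq_nonneg ‖μ‖, expect_norm_centered_sub_sq_le u X v, n.cast_nonneg (α := ℝ)]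
    _ = _ := by ring

end CoordMean

section Prox

open Set Filter Topology

variable {V : Type*} [NormedAddCommGroup V] {f : V → ℝ} {κ : ℝ} {h h' w₀ w₁ : V}

/-- `w₀` is a proximal point of `f` at `h`: it minimizes `f` plus the ridge penalty centred at `h`.
The biased ERM is the proximal point of the empirical risk at the bias. -/
def IsProx (f : V → ℝ) (κ : ℝ) (h w₀ : V) : Prop :=
  ∀ w, f w₀ + κ / 2 * ‖w₀ - h‖ ^ 2 ≤ f w + κ / 2 * ‖w - h‖ ^ 2

lemma IsProx.mul (hw : IsProx f κ h w₀) {c : ℝ} (hc : 0 ≤ c) :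
    IsProx (fun w => c * f w) (c * κ) h w₀ := fun w => by
  have := mul_le_mul_of_nonneg_left (hw w) hc
  linarith

variable [InnerProductSpace ℝ V]

lemma exists_isProx [FiniteDimensional ℝ V] (hf : Continuous f) (hf0 : ∀ w, 0 ≤ f w) (hκ : 0 < κ)
    (h : V) : ∃ w₀, IsProx f κ h w₀ := by
  refine Continuous.exists_forall_le (by fun_prop) ?_
  refine tendsto_atTop_mono (fun w => le_add_of_nonneg_left (hf0 w)) ?_
  refine Tendsto.const_mul_atTop (by positivity) ((tendsto_pow_atTop two_ne_zero).comp ?_)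
  exact tendsto_norm_cocompact_atTop.comp
    (Homeomorph.subRight h).isClosedEmbedding.tendsto_cocompact

namespace IsProx

lemma inner_sub_sub_nonneg (hκ : 0 < κ) (hw₀ : IsProx f κ h w₀) (hw₁ : IsProx f κ h' w₁) :
    0 ≤ ⟪w₀ - w₁, h - h'⟫_ℝ := by
  have hsum : κ * ⟪w₀ - w₁, h - h'⟫_ℝ
      = κ / 2 * ‖w₁ - h‖ ^ 2 + κ / 2 * ‖w₀ - h'‖ ^ 2
        - (κ / 2 * ‖w₀ - h‖ ^ 2 + κ / 2 * ‖w₁ - h'‖ ^ 2) := by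
    simp only [norm_sub_sq_real, inner_sub_left, inner_sub_right]
    ring
  have := hw₀ w₁
  have := hw₁ w₀
  exact nonneg_of_mul_nonneg_right (by linarith) hκ

lemma le_add_inner (hf : ConvexOn ℝ univ f) (hw : IsProx f κ h w₀) (w : V) :
    f w₀ ≤ f w + κ * ⟪w₀ - h, w - w₀⟫_ℝ := by
  have hstep : ∀ t ∈ Ioo (0 : ℝ) 1,
      f w₀ ≤ f w + κ * ⟪w₀ - h, w - w₀⟫_ℝ + t * (κ / 2 * ‖w - w₀‖ ^ 2) := by
    intro t ht
    have hmin := hw (w₀ + t • (w - w₀))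
    have hconv : f (w₀ + t • (w - w₀)) ≤ f w₀ + t * (f w - f w₀) := by
      have := hf.2 (mem_univ w₀) (mem_univ w) (sub_nonneg.2 ht.2.le) ht.1.le (sub_add_cancel 1 t)
      rw [show (1 - t) • w₀ + t • w = w₀ + t • (w - w₀) by module, smul_eq_mul, smul_eq_mul] at this
      linarith
    rw [add_sub_right_comm, norm_add_sq_real, inner_smul_right, norm_smul, mul_pow,
      Real.norm_eq_abs, sq_abs] at hmin
    refine le_of_mul_le_mul_left ?_ ht.1
    linarith
  have hlim : Tendsto (fun t : ℝ => f w + κ * ⟪w₀ - h, w - w₀⟫_ℝ + t * (κ / 2 * ‖w - w₀‖ ^ 2))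
      (𝓝[>] 0) (𝓝 (f w + κ * ⟪w₀ - h, w - w₀⟫_ℝ)) := by
    refine tendsto_nhdsWithin_of_tendsto_nhds (Continuous.tendsto' (by fun_prop) _ _ (by simp))
  exact ge_of_tendsto hlim (mem_of_superset (Ioo_mem_nhdsGT one_pos) hstep)

lemma mul_norm_sub_sq_le (hf : ConvexOn ℝ univ f) (hw : IsProx f κ h w₀) {g : V}
    (hg : ∀ w, f w₁ + ⟪g, w - w₁⟫_ℝ ≤ f w) :
    κ * ‖w₀ - w₁‖ ^ 2 ≤ ⟪-(κ • (w₁ - h)) - g, w₀ - w₁⟫_ℝ := by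
  have hprox := hw.le_add_inner hf w₁
  have hsub := hg w₀
  have hexp : ⟪-(κ • (w₁ - h)) - g, w₀ - w₁⟫_ℝ
      = κ * ‖w₀ - w₁‖ ^ 2 + κ * ⟪w₀ - h, w₁ - w₀⟫_ℝ - ⟪g, w₀ - w₁⟫_ℝ := by
    rw [← neg_sub w₀ w₁, ← real_inner_self_eq_norm_sq]
    simp only [inner_sub_left, inner_neg_left, inner_neg_right, inner_smul_left, conj_trivial]
    ring
  linarith

lemma mul_norm_sub_le (hf : ConvexOn ℝ univ f) (hw : IsProx f κ h w₀) {C : ℝ} (hC : 0 ≤ C)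
    (hlip : ∀ v w, f v - f w ≤ C * ‖v - w‖) : κ * ‖w₀ - h‖ ≤ C := by
  have hprox := hw.le_add_inner hf h
  rw [← neg_sub w₀ h, inner_neg_right, real_inner_self_eq_norm_sq] at hprox
  rcases (norm_nonneg (w₀ - h)).eq_or_lt with h0 | h0
  · rwa [← h0, mul_zero]
  · have := hlip h w₀
    rw [norm_sub_rev] at this
    refine le_of_mul_le_mul_right ?_ h0
    linarith

lemma norm_sub_le (hf : ConvexOn ℝ univ f) (hκ : 0 < κ) (hw₀ : IsProx f κ h w₀)
    (hw₁ : IsProx f κ h' w₁) : ‖w₀ - w₁‖ ≤ ‖h - h'‖ := by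
  have hfirm := hw₀.mul_norm_sub_sq_le hf (w₁ := w₁) (g := -(κ • (w₁ - h'))) fun w => by
    have := hw₁.le_add_inner hf w
    rw [inner_neg_left, inner_smul_left]
    simpa using this
  rw [show -(κ • (w₁ - h)) - -(κ • (w₁ - h')) = κ • (h - h') by module, inner_smul_left] at hfirm
  have hfirm' : ‖w₀ - w₁‖ ^ 2 ≤ ‖h - h'‖ * ‖w₀ - w₁‖ :=
    (le_of_mul_le_mul_left hfirm hκ).trans (real_inner_le_norm _ _)
  nlinarith [norm_nonneg (w₀ - w₁), norm_nonneg (h - h')]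

/-- The minimal value of the penalized objective is convex in the bias, with gradient
`-κ (w₀ - h)`. -/
lemma add_inner_le (hf : ConvexOn ℝ univ f) (hκ : 0 ≤ κ) (hw : IsProx f κ h w₀) (w : V) :
    f w₀ + κ / 2 * ‖w₀ - h‖ ^ 2 + ⟪(-κ) • (w₀ - h), h' - h⟫_ℝ
      ≤ f w + κ / 2 * ‖w - h'‖ ^ 2 := by
  have hprox := hw.le_add_inner hf w
  have hsquare : κ / 2 * ‖(w - h') - (w₀ - h)‖ ^ 2
      = κ / 2 * ‖w - h'‖ ^ 2 - κ * ⟪w₀ - h, (w - h') - (w₀ - h)⟫_ℝ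
        - κ / 2 * ‖w₀ - h‖ ^ 2 := by
    rw [norm_sub_sq_real, inner_sub_right (w₀ - h), real_inner_self_eq_norm_sq,
      real_inner_comm (w₀ - h)]
    ring
  have hinner : ⟪w₀ - h, w - w₀⟫_ℝ
      = ⟪w₀ - h, (w - h') - (w₀ - h)⟫_ℝ + ⟪w₀ - h, h' - h⟫_ℝ := by
    rw [← inner_add_right]
    congr 1
    abel
  rw [inner_smul_left]
  simp only [conj_trivial]
  nlinarith [sq_nonneg ‖(w - h') - (w₀ - h)‖]

lemma average_le {e : V → V} (hf : ConvexOn ℝ univ f) (hκ : 0 ≤ κ)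
    (he : ∀ h, IsProx f κ h (e h)) {T : ℕ} (hT : 0 < T) (u : Fin T → V) {hbar : V}
    (hbar_eq : hbar = (T : ℝ)⁻¹ • ∑ t, u t) (m w : V) :
    f (e hbar) + κ / 2 * ‖e hbar - hbar‖ ^ 2
      ≤ f w + κ / 2 * ‖w - m‖ ^ 2
        + (T : ℝ)⁻¹ * ∑ t, ⟪(-κ) • (e (u t) - u t), u t - m⟫_ℝ := by
  have hT' : (0 : ℝ) < T := by exact_mod_cast hT
  have hstep (t : Fin T) : f (e hbar) + κ / 2 * ‖e hbar - hbar‖ ^ 2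
      + ⟪(-κ) • (e hbar - hbar), u t - hbar⟫_ℝ
      ≤ f w + κ / 2 * ‖w - m‖ ^ 2 + ⟪(-κ) • (e (u t) - u t), u t - m⟫_ℝ := by
    have hbias := (he hbar).add_inner_le (h' := u t) hf hκ (e (u t))
    have htarget := (he (u t)).add_inner_le (h' := m) hf hκ w
    rw [← neg_sub (u t) m, inner_neg_right] at htarget
    linarith
  have hzero : ∑ t, (u t - hbar) = 0 := by
    rw [Finset.sum_sub_distrib, Finset.sum_const, Finset.card_univ, Fintype.card_fin, hbar_eq,
      ← Nat.cast_smul_eq_nsmul ℝ, smul_inv_smul₀ hT'.ne', sub_self]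
  have hsum := Finset.sum_le_sum fun t (_ : t ∈ Finset.univ) => hstep t
  simp_rw [Finset.sum_add_distrib] at hsum
  rw [← inner_sum, hzero, inner_zero_right, add_zero] at hsum
  simp only [Finset.sum_const, Finset.card_univ, Fintype.card_fin, nsmul_eq_mul] at hsum
  refine le_of_mul_le_mul_left ?_ hT'
  rw [mul_add (T : ℝ) (f w + _), mul_inv_cancel_left₀ hT'.ne']
  linarith

end IsProx

end Prox

section Subgradients

open Set Filter Topology

section Real

variable {f : ℝ → ℝ} {a : ℝ}

lemma isSubgradAt_of_mem_Icc (hf : ConvexOn ℝ univ f) {s : ℝ}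
    (hs : s ∈ Icc (derivWithin f (Iio a) a) (derivWithin f (Ioi a) a)) : IsSubgradAt f s a := by
  intro b
  rcases lt_trichotomy a b with hab | rfl | hab
  · have h := hf.rightDeriv_le_slope_of_mem_interior (x := a) (y := b) (by simp) (mem_univ _) hab
    rw [slope_def_field, le_div_iff₀ (sub_pos.2 hab)] at h
    nlinarith [hs.2]
  · simp
  · have h := hf.slope_le_leftDeriv_of_mem_interior (x := b) (y := a) (mem_univ _) (by simp) hab
    rw [slope_def_field, div_le_iff₀ (sub_pos.2 hab)] at h
    nlinarith [hs.1]

lemma IsSubgradAt.abs_le {L s : ℝ} (hs : IsSubgradAt f s a)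
    (hf : ∀ a b, |f a - f b| ≤ L * |a - b|) : |s| ≤ L := by
  have hright := hs (a + 1)
  have hleft := hs (a - 1)
  have hright' := le_of_abs_le (hf (a + 1) a)
  have hleft' := le_of_abs_le (hf (a - 1) a)
  simp only [add_sub_cancel_left, abs_one, sub_sub_cancel_left, abs_neg] at *
  exact _root_.abs_le.2 ⟨by linarith, by linarith⟩

lemma hasDerivWithinAt_comp_ray_of_pos (hf : ConvexOn ℝ univ f) {c : ℝ} (hc : 0 < c) :
    HasDerivWithinAt (fun t => f (a + t * c)) (derivWithin f (Ioi a) a * c) (Ioi 0) 0 := by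
  have hray : HasDerivWithinAt (fun t : ℝ => a + t * c) c (Ioi 0) 0 := by
    simpa using ((hasDerivAt_id (0 : ℝ)).mul_const c |>.const_add a).hasDerivWithinAt
  refine HasDerivWithinAt.comp (h₂ := f) (s' := Ioi a) 0 ?_ hray fun t ht => ?_
  · simpa using hf.hasDerivWithinAt_rightDeriv_of_mem_interior (x := a) (by simp)
  · simpa using mul_pos ht hc

lemma hasDerivWithinAt_comp_ray_of_neg (hf : ConvexOn ℝ univ f) {c : ℝ} (hc : c < 0) :
    HasDerivWithinAt (fun t => f (a + t * c)) (derivWithin f (Iio a) a * c) (Ioi 0) 0 := by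
  have hray : HasDerivWithinAt (fun t : ℝ => a + t * c) c (Ioi 0) 0 := by
    simpa using ((hasDerivAt_id (0 : ℝ)).mul_const c |>.const_add a).hasDerivWithinAt
  refine HasDerivWithinAt.comp (h₂ := f) (s' := Iio a) 0 ?_ hray fun t ht => ?_
  · simpa using hf.hasDerivWithinAt_leftDeriv_of_mem_interior (x := a) (by simp)
  · simpa using mul_neg_of_pos_of_neg ht hc

lemma exists_mem_Icc_hasDerivWithinAt (hf : ConvexOn ℝ univ f) (a c : ℝ) :
    ∃ s ∈ Icc (derivWithin f (Iio a) a) (derivWithin f (Ioi a) a),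
      HasDerivWithinAt (fun t => f (a + t * c)) (s * c) (Ioi 0) 0 := by
  have hle := hf.leftDeriv_le_rightDeriv_of_mem_interior (x := a) (by simp)
  rcases lt_trichotomy c 0 with hc | rfl | hc
  · exact ⟨_, left_mem_Icc.2 hle, hasDerivWithinAt_comp_ray_of_neg hf hc⟩
  · exact ⟨_, left_mem_Icc.2 hle, by simpa using hasDerivWithinAt_const _ _ _⟩
  · exact ⟨_, right_mem_Icc.2 hle, hasDerivWithinAt_comp_ray_of_pos hf hc⟩

end Real

variable {V : Type*} [NormedAddCommGroup V] [InnerProductSpace ℝ V]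

lemma mem_of_forall_exists_inner_le [CompleteSpace V] {K : Set V} (hconv : Convex ℝ K)
    (hclosed : IsClosed K) {p : V} (h : ∀ q, ∃ y ∈ K, ⟪q, p⟫_ℝ ≤ ⟪q, y⟫_ℝ) : p ∈ K := by
  by_contra hp
  obtain ⟨f, c, hK, hc⟩ := geometric_hahn_banach_closed_point hconv hclosed hp
  obtain ⟨y, hy, hpy⟩ := h ((InnerProductSpace.toDual ℝ V).symm f)
  simp only [InnerProductSpace.toDual_symm_apply] at hpy
  exact (hpy.trans_lt (hK y hy)).not_gt hc

variable {ι : Type*} [Fintype ι] {x : ι → V} {φ : ι → ℝ → ℝ} {w₀ p : V}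

lemma exists_mem_Icc_inner_le (hφ : ∀ j, ConvexOn ℝ univ (φ j))
    (hp : ∀ w, ∑ j, φ j ⟪x j, w₀⟫_ℝ + ⟪p, w - w₀⟫_ℝ ≤ ∑ j, φ j ⟪x j, w⟫_ℝ) (q : V) :
    ∃ s : ι → ℝ, (∀ j, s j ∈ Icc (derivWithin (φ j) (Iio ⟪x j, w₀⟫_ℝ) ⟪x j, w₀⟫_ℝ)
      (derivWithin (φ j) (Ioi ⟪x j, w₀⟫_ℝ) ⟪x j, w₀⟫_ℝ)) ∧ ⟪q, p⟫_ℝ ≤ ⟪q, ∑ j, s j • x j⟫_ℝ := by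
  choose s hs hderiv using fun j =>
    exists_mem_Icc_hasDerivWithinAt (hφ j) ⟪x j, w₀⟫_ℝ ⟪x j, q⟫_ℝ
  have hsum := HasDerivWithinAt.fun_sum fun j (_ : j ∈ Finset.univ) => hderiv j
  refine ⟨s, hs, ?_⟩
  rw [inner_sum, real_inner_comm]
  simp only [inner_smul_right, fun j => real_inner_comm (x j) q]
  refine ge_of_tendsto ((hasDerivWithinAt_iff_tendsto_slope' self_notMem_Ioi).mp hsum) ?_
  filter_upwards [self_mem_nhdsWithin] with t ht
  have hray := hp (w₀ + t • q)
  simp only [add_sub_cancel_left, inner_add_right, inner_smul_right] at hray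
  rw [slope_def_field, sub_zero, le_div_iff₀ ht]
  simp only [zero_mul, add_zero]
  linarith

/-- The sums `∑ j, s j • x j` with `s j` in the subdifferential of `φ j` form a compact convex set,
and the directional derivatives show that no hyperplane separates `p` from it. -/
lemma exists_isSubgradAt_sum_smul_eq [CompleteSpace V] (hφ : ∀ j, ConvexOn ℝ univ (φ j))
    (hp : ∀ w, ∑ j, φ j ⟪x j, w₀⟫_ℝ + ⟪p, w - w₀⟫_ℝ ≤ ∑ j, φ j ⟪x j, w⟫_ℝ) :
    ∃ s : ι → ℝ, (∀ j, IsSubgradAt (φ j) (s j) ⟪x j, w₀⟫_ℝ) ∧ ∑ j, s j • x j = p := by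
  set B : Set (ι → ℝ) := Set.pi univ fun j =>
    Icc (derivWithin (φ j) (Iio ⟪x j, w₀⟫_ℝ) ⟪x j, w₀⟫_ℝ)
      (derivWithin (φ j) (Ioi ⟪x j, w₀⟫_ℝ) ⟪x j, w₀⟫_ℝ)
  have hcompact : IsCompact B := isCompact_univ_pi fun _ => isCompact_Icc
  have hconvex : Convex ℝ B := convex_pi fun _ _ => convex_Icc _ _
  have hcont : Continuous (Fintype.linearCombination ℝ x) := by
    simp only [funext (Fintype.linearCombination_apply ℝ x)]
    fun_prop
  obtain ⟨s, hs, hsp⟩ : p ∈ Fintype.linearCombination ℝ x '' B := by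
    refine mem_of_forall_exists_inner_le (hconvex.linear_image _) (hcompact.image hcont).isClosed
      fun q => ?_
    obtain ⟨s, hs, hq⟩ := exists_mem_Icc_inner_le hφ hp q
    exact ⟨_, mem_image_of_mem _ fun j _ => hs j, by rwa [Fintype.linearCombination_apply]⟩
  exact ⟨s, fun j => isSubgradAt_of_mem_Icc (hφ j) (hs j (mem_univ j)),
    by rw [← hsp, Fintype.linearCombination_apply]⟩

end Subgradients

section LeaveOneOut

open Finset
open scoped BigOperators

variable {I V : Type*} [Fintype I] [NormedAddCommGroup V] [InnerProductSpace ℝ V] {n : ℕ}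
  {κ : ℝ} {h : V}

lemma neg_norm_sq_div_le_inner_add (hκ : 0 < κ) (g v : V) :
    -(‖g‖ ^ 2 / (2 * κ)) ≤ ⟪g, v⟫_ℝ + κ / 2 * ‖v‖ ^ 2 := by
  have hsq : ‖g + κ • v‖ ^ 2 / (2 * κ)
      = ‖g‖ ^ 2 / (2 * κ) + (⟪g, v⟫_ℝ + κ / 2 * ‖v‖ ^ 2) := by
    rw [norm_add_sq_real, inner_smul_right, norm_smul, mul_pow, Real.norm_eq_abs, sq_abs]
    field_simp
    ring
  have : 0 ≤ ‖g + κ • v‖ ^ 2 / (2 * κ) := by positivity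
  linarith

variable [Module ℚ≥0 V] [Nonempty I] {φ : I → V → ℝ} {wT : (Fin (n + 1) → I) → V}
  {u : Fin (n + 1) → (Fin (n + 1) → I) → V}

/-- Averaging the subgradient inequalities at `wT τ` over the samples `τ` that contain the point `i`
gives an affine minorant of `φ i`; the minorants bound the objective on every `n`-point sample. -/
lemma le_expect_objective (hκ : 0 < κ)
    (hu : ∀ τ J w, φ (τ J) (wT τ) + ⟪u J τ, w - wT τ⟫_ℝ ≤ φ (τ J) w) (wS : (Fin n → I) → V) :
    n * (𝔼 τ, 𝔼 J, φ (τ J) (wT τ) - 𝔼 τ, 𝔼 J, ⟪u J τ, wT τ - h⟫_ℝ)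
        - (𝔼 σ : Fin n → I, ‖∑ j, coordMean u (σ j)‖ ^ 2) / (2 * κ)
      ≤ 𝔼 σ, (∑ j, φ (σ j) (wS σ) + κ / 2 * ‖wS σ - h‖ ^ 2) := by
  set g : I → ℝ := fun i => 𝔼 J : Fin (n + 1), 𝔼 σ : Fin n → I,
    (φ i (wT (J.insertNth i σ)) - ⟪u J (J.insertNth i σ), wT (J.insertNth i σ) - h⟫_ℝ) with hg
  have hminorant (i : I) (w : V) : g i + ⟪coordMean u i, w - h⟫_ℝ ≤ φ i w := by
    simp only [hg, coordMean, expect_inner, ← expect_add_distrib]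
    refine expect_le univ_nonempty fun J _ => expect_le univ_nonempty fun σ _ => ?_
    have := hu (J.insertNth i σ) J w
    rw [Fin.insertNth_apply_same, ← sub_sub_sub_cancel_right w _ h, inner_sub_right] at this
    linarith
  have hgmean : 𝔼 i, g i = 𝔼 τ, 𝔼 J, φ (τ J) (wT τ) - 𝔼 τ, 𝔼 J, ⟪u J τ, wT τ - h⟫_ℝ := by
    simp_rw [← expect_sub_distrib]
    rw [expect_expect_eq_expect_insertNth fun J τ => φ (τ J) (wT τ) - ⟪u J τ, wT τ - h⟫_ℝ]
    simp only [hg, Fin.insertNth_apply_same]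
  have hgsum : 𝔼 σ : Fin n → I, ∑ j, g (σ j) = n * 𝔼 i, g i := by
    simp_rw [expect_sum_comm, expect_apply_coord]
    simp
  rw [← hgmean, ← hgsum, div_eq_mul_inv, expect_mul, ← expect_sub_distrib]
  refine expect_le_expect fun σ _ => ?_
  calc ∑ j, g (σ j) - ‖∑ j, coordMean u (σ j)‖ ^ 2 * (2 * κ)⁻¹
      ≤ ∑ j, g (σ j) + (⟪∑ j, coordMean u (σ j), wS σ - h⟫_ℝ + κ / 2 * ‖wS σ - h‖ ^ 2) := by
        have := neg_norm_sq_div_le_inner_add hκ (∑ j, coordMean u (σ j)) (wS σ - h)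
        rw [div_eq_mul_inv] at this
        linarith
    _ ≤ _ := by
        rw [← add_assoc, sum_inner, ← sum_add_distrib]
        gcongr with j
        exact hminorant _ _

lemma le_expect_objective_of_sum_eq (hκ : 0 < κ)
    (hu : ∀ τ J w, φ (τ J) (wT τ) + ⟪u J τ, w - wT τ⟫_ℝ ≤ φ (τ J) w)
    (hsum : ∀ τ, ∑ J, u J τ = -(κ • (wT τ - h))) (wS : (Fin n → I) → V) :
    n * (𝔼 τ, 𝔼 J, φ (τ J) (wT τ)
        - (𝔼 τ, 𝔼 J, ‖u J τ - κ • (wS (J.removeNth τ) - wT τ)‖ ^ 2) / κ)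
      ≤ 𝔼 σ, (∑ j, φ (σ j) (wS σ) + κ / 2 * ‖wS σ - h‖ ^ 2) := by
  have hforce : 𝔼 τ, 𝔼 J, ⟪u J τ, wT τ - h⟫_ℝ
      = -((𝔼 τ, ‖∑ K, u K τ‖ ^ 2) / (n + 1)) / κ := by
    simp_rw [div_eq_mul_inv, expect_mul, ← expect_neg_distrib, expect_mul]
    refine expect_congr rfl fun τ _ => ?_
    rw [Fintype.expect_eq_sum_div_card, ← sum_inner, hsum, norm_neg, norm_smul, inner_neg_left,
      inner_smul_left, real_inner_self_eq_norm_sq, mul_pow, Real.norm_eq_abs, sq_abs]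
    simp
    field_simp
  have hsq := expect_norm_sum_coordMean_sq_le u fun σ => κ • (wS σ - h)
  have hresidual (τ : Fin (n + 1) → I) (J : Fin (n + 1)) :
      u J τ - ∑ K, u K τ - κ • (wS (J.removeNth τ) - h)
        = u J τ - κ • (wS (J.removeNth τ) - wT τ) := by
    rw [hsum]
    module
  simp only [hresidual] at hsq
  refine le_trans ?_ (le_expect_objective hκ hu wS (h := h))
  rw [hforce]
  have := div_le_div_of_nonneg_right hsq (by positivity : 0 ≤ 2 * κ)
  field_simp at this ⊢
  linarith

end LeaveOneOut

section LinearModels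

open Finset
open scoped BigOperators

variable {V : Type*} [NormedAddCommGroup V] [InnerProductSpace ℝ V]

/-- If removing a point with force `s • x` displaces the minimizer by `p`, then the residual
of the linear response is controlled by the increase `D` of the loss at that point. -/
lemma norm_smul_sub_smul_sq_le {x p : V} {s κ L R D : ℝ} (hκ : 0 < κ) (hR : 0 ≤ R)
    (hx : ‖x‖ ≤ R) (hs : |s| ≤ L) (hD : D ≤ L * |⟪x, p⟫_ℝ|)
    (hp : κ * ‖p‖ ^ 2 ≤ ⟪s • x, p⟫_ℝ) :
    ‖s • x - κ • p‖ ^ 2 ≤ (L * R) ^ 2 - κ * D := by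
  set q := ⟪x, p⟫_ℝ with hq
  rw [inner_smul_left, conj_trivial, ← hq] at hp
  have hsq : s * q = |s| * |q| := by
    rw [← abs_mul, abs_of_nonneg (le_trans (by positivity) hp)]
  have hqp : |q| ≤ R * ‖p‖ := (abs_real_inner_le_norm x p).trans (by gcongr)
  have hκq : κ * |q| ≤ R ^ 2 * |s| := by
    rcases (abs_nonneg q).eq_or_lt with h0 | h0
    · rw [← h0, mul_zero]
      positivity
    · refine le_of_mul_le_mul_right ?_ h0
      calc κ * |q| * |q| ≤ κ * (R * ‖p‖ * (R * ‖p‖)) := by rw [mul_assoc]; gcongr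
        _ = R ^ 2 * (κ * ‖p‖ ^ 2) := by ring
        _ ≤ R ^ 2 * (|s| * |q|) := by rw [← hsq]; gcongr
        _ = R ^ 2 * |s| * |q| := by ring
  have hx2 : |s| ^ 2 * ‖x‖ ^ 2 ≤ |s| ^ 2 * R ^ 2 := by gcongr
  have hgap : 0 ≤ (L - |s|) * (R ^ 2 * (L + |s|) - κ * |q|) := by
    refine mul_nonneg (sub_nonneg.2 hs) (sub_nonneg.2 (hκq.trans ?_))
    nlinarith [mul_nonneg (sq_nonneg R) ((abs_nonneg s).trans hs)]
  calc ‖s • x - κ • p‖ ^ 2 = |s| ^ 2 * ‖x‖ ^ 2 - 2 * κ * (|s| * |q|) + κ * (κ * ‖p‖ ^ 2) := by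
        rw [norm_sub_sq_real, norm_smul, norm_smul, inner_smul_left, inner_smul_right,
          conj_trivial, ← hq, ← hsq, mul_pow, mul_pow, Real.norm_eq_abs, Real.norm_eq_abs, sq_abs κ]
        ring
    _ ≤ |s| ^ 2 * R ^ 2 - κ * (|s| * |q|) := by
        nlinarith [mul_le_mul_of_nonneg_left hp hκ.le]
    _ ≤ (L * R) ^ 2 - κ * D := by
        nlinarith [mul_le_mul_of_nonneg_left hD hκ.le]

variable {I : Type*} {n : ℕ} {x : I → V} {φ : I → ℝ → ℝ} {L R κ : ℝ} {h : V}

lemma convexOn_sum_comp_inner {ι : Type*} [Fintype ι] {x : ι → V} {φ : ι → ℝ → ℝ}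
    (hφ : ∀ j, ConvexOn ℝ Set.univ (φ j)) :
    ConvexOn ℝ Set.univ fun w => ∑ j, φ j ⟪x j, w⟫_ℝ := by
  refine ⟨convex_univ, fun v _ w _ a b ha hb hab => ?_⟩
  simp only [smul_sum, ← sum_add_distrib]
  exact sum_le_sum fun j _ =>
    ((hφ j).comp_linearMap (innerₗ V (x j))).2 (Set.mem_univ v) (Set.mem_univ w) ha hb hab

lemma mul_norm_removeNth_sub_sq_le (hφ : ∀ i, ConvexOn ℝ Set.univ (φ i)) {τ : Fin (n + 1) → I}
    {J : Fin (n + 1)} {wS wT : V} {s : Fin (n + 1) → ℝ}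
    (hwS : IsProx (fun w => ∑ j, φ (J.removeNth τ j) ⟪x (J.removeNth τ j), w⟫_ℝ) κ h wS)
    (hs : ∀ K, IsSubgradAt (φ (τ K)) (s K) ⟪x (τ K), wT⟫_ℝ)
    (hsum : ∑ K, s K • x (τ K) = -(κ • (wT - h))) :
    κ * ‖wS - wT‖ ^ 2 ≤ ⟪s J • x (τ J), wS - wT⟫_ℝ := by
  rw [Fin.sum_univ_succAbove _ J] at hsum
  have hsub := hwS.mul_norm_sub_sq_le (convexOn_sum_comp_inner fun j => hφ _) (w₁ := wT)
    (g := ∑ j, s (J.succAbove j) • x (τ (J.succAbove j))) fun w => by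
      rw [sum_inner, ← sum_add_distrib]
      refine sum_le_sum fun j _ => ?_
      rw [inner_smul_left, conj_trivial, inner_sub_right]
      exact hs _ _
  rwa [← hsum, add_sub_cancel_right] at hsub

/-- Swapping the test point with a training point turns the risk of the
`n`-point solutions into a leave-one-out average over the samples of size `n + 1`. -/
lemma expect_loss_le_expect_objective [FiniteDimensional ℝ V] [Module ℚ≥0 V] [Fintype I]
    [Nonempty I] (hn : 0 < n) (hR : 0 ≤ R) (hx : ∀ i, ‖x i‖ ≤ R)
    (hφ : ∀ i, ConvexOn ℝ Set.univ (φ i)) (hφ0 : ∀ i a, 0 ≤ φ i a)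
    (hφL : ∀ i a b, |φ i a - φ i b| ≤ L * |a - b|) (hκ : 0 < κ) {wS : (Fin n → I) → V}
    (hwS : ∀ σ, IsProx (fun w => ∑ j, φ (σ j) ⟪x (σ j), w⟫_ℝ) κ h (wS σ)) :
    𝔼 i, 𝔼 σ, φ i ⟪x i, wS σ⟫_ℝ
      ≤ (n : ℝ)⁻¹ * 𝔼 σ, (∑ j, φ (σ j) ⟪x (σ j), wS σ⟫_ℝ + κ / 2 * ‖wS σ - h‖ ^ 2)
        + (L * R) ^ 2 / κ := by
  have hconv {k : ℕ} (τ : Fin k → I) :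
      ConvexOn ℝ Set.univ fun w => ∑ j, φ (τ j) ⟪x (τ j), w⟫_ℝ :=
    convexOn_sum_comp_inner fun j => hφ _
  choose wT hwT using fun τ : Fin (n + 1) → I =>
    exists_isProx (continuousOn_univ.1 ((hconv τ).continuousOn isOpen_univ))
      (fun w => sum_nonneg fun j _ => hφ0 _ _) hκ h
  choose s hs hsum using fun τ : Fin (n + 1) → I =>
    exists_isSubgradAt_sum_smul_eq (x := fun j => x (τ j)) (p := -(κ • (wT τ - h)))
      (fun j => hφ (τ j)) fun w => by
        have := (hwT τ).le_add_inner (hconv τ) w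
        rw [inner_neg_left, inner_smul_left]
        simpa using this
  have hobjective := le_expect_objective_of_sum_eq (φ := fun i w => φ i ⟪x i, w⟫_ℝ)
    (u := fun J τ => s τ J • x (τ J)) hκ
    (fun τ J w => by
      rw [inner_smul_left, conj_trivial, inner_sub_right]
      exact hs τ J _) hsum wS
  have hresidual (τ : Fin (n + 1) → I) (J : Fin (n + 1)) :
      ‖s τ J • x (τ J) - κ • (wS (J.removeNth τ) - wT τ)‖ ^ 2
        ≤ (L * R) ^ 2
          - κ * (φ (τ J) ⟪x (τ J), wS (J.removeNth τ)⟫_ℝ - φ (τ J) ⟪x (τ J), wT τ⟫_ℝ) :=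
    norm_smul_sub_smul_sq_le hκ hR (hx _) ((hs τ J).abs_le (hφL _))
      (by rw [inner_sub_right]; exact le_of_abs_le (hφL _ _ _))
      (mul_norm_removeNth_sub_sq_le hφ (hwS _) (hs τ) (hsum τ))
  have hmean := expect_le_expect fun τ (_ : τ ∈ univ) =>
    expect_le_expect fun J (_ : J ∈ univ) => hresidual τ J
  simp_rw [expect_sub_distrib, Fintype.expect_const, ← mul_expect, expect_sub_distrib] at hmean
  rw [expect_expect_eq_expect_insertNth fun J τ => φ (τ J) ⟪x (τ J), wS (J.removeNth τ)⟫_ℝ] at hmean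
  simp only [Fin.insertNth_apply_same, Fin.removeNth_insertNth, Fintype.expect_const] at hmean
  have hscaled := mul_le_mul_of_nonneg_left hobjective (by positivity : 0 ≤ (n : ℝ)⁻¹)
  rw [inv_mul_cancel_left₀ (by positivity)] at hscaled
  have hdiv := div_le_div_of_nonneg_right hmean hκ.le
  rw [sub_div, mul_div_cancel_left₀ _ hκ.ne'] at hdiv
  linarith

end LinearModels

section BiasedERM

open Finset
open scoped BigOperators

/-- An observation at which the loss is nonnegative, convex and `L`-Lipschitz and whose input has
norm at most `R`. Under the assumptions of the theorem almost every observation is regular. -/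
structure IsRegularPt {d : ℕ} (ℓ : ℝ → ℝ → ℝ) (L R : ℝ) (z : Pt d) : Prop where
  norm_le : ‖z.1‖ ≤ R
  nonneg : ∀ a, 0 ≤ ℓ a z.2
  convex : ConvexOn ℝ Set.univ fun a => ℓ a z.2
  lipschitz : ∀ a b, |ℓ a z.2 - ℓ b z.2| ≤ L * |a - b|

variable {d n : ℕ} {ℓ : ℝ → ℝ → ℝ} {L R lam : ℝ}

lemma IsRegularPt.abs_loss_sub_le {z : Pt d} (hz : IsRegularPt ℓ L R z) (hL : 0 ≤ L)
    (v w : Vec d) : |ℓ ⟪z.1, v⟫_ℝ z.2 - ℓ ⟪z.1, w⟫_ℝ z.2| ≤ L * R * ‖v - w‖ := by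
  refine (hz.lipschitz _ _).trans ?_
  rw [← inner_sub_right, mul_assoc]
  gcongr
  exact (abs_real_inner_le_norm _ _).trans (by gcongr; exact hz.norm_le)

lemma IsRegularPt.continuous_loss {z : Pt d} (hz : IsRegularPt ℓ L R z) :
    Continuous fun w : Vec d => ℓ ⟪z.1, w⟫_ℝ z.2 := by
  have : Continuous fun a => ℓ a z.2 := continuousOn_univ.1 (hz.convex.continuousOn isOpen_univ)
  fun_prop

lemma mul_empRisk (hn : 0 < n) (S : Fin n → Pt d) (w : Vec d) :
    n * empRisk ℓ S w = ∑ k, ℓ ⟪(S k).1, w⟫_ℝ (S k).2 :=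
  mul_inv_cancel_left₀ (by positivity) _

section Regular

variable {S : Fin n → Pt d} (hS : ∀ k, IsRegularPt ℓ L R (S k))
include hS

lemma empRisk_nonneg (w : Vec d) : 0 ≤ empRisk ℓ S w :=
  mul_nonneg (by positivity) (sum_nonneg fun k _ => (hS k).nonneg _)

lemma convexOn_empRisk : ConvexOn ℝ Set.univ (empRisk ℓ S) :=
  (convexOn_sum_comp_inner fun k => (hS k).convex).smul (by positivity)

lemma empRisk_sub_le (hn : 0 < n) (hL : 0 ≤ L) (v w : Vec d) :
    empRisk ℓ S v - empRisk ℓ S w ≤ L * R * ‖v - w‖ := by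
  refine le_of_mul_le_mul_left ?_ (Nat.cast_pos.2 hn : (0 : ℝ) < n)
  calc n * (empRisk ℓ S v - empRisk ℓ S w)
      = ∑ k, (ℓ ⟪(S k).1, v⟫_ℝ (S k).2 - ℓ ⟪(S k).1, w⟫_ℝ (S k).2) := by
        rw [mul_sub, mul_empRisk hn, mul_empRisk hn, sum_sub_distrib]
    _ ≤ ∑ _k : Fin n, L * R * ‖v - w‖ :=
        sum_le_sum fun k _ => le_of_abs_le ((hS k).abs_loss_sub_le hL v w)
    _ = n * (L * R * ‖v - w‖) := by simp

end Regular

/-- The loss at the first point of `ζ` of the estimator `e` trained on the remaining points, minus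
the regularized empirical risk of `e` on those points. Its mean is the generalization gap. -/
def leaveOneOutGap (ℓ : ℝ → ℝ → ℝ) (lam : ℝ) (h : Vec d) (e : (Fin n → Pt d) → Vec d)
    (ζ : Fin (n + 1) → Pt d) : ℝ :=
  ℓ ⟪(ζ 0).1, e (Fin.tail ζ)⟫_ℝ (ζ 0).2 - regRisk ℓ lam (Fin.tail ζ) h (e (Fin.tail ζ))

variable {h : Vec d} {e : (Fin n → Pt d) → Vec d}

lemma expect_leaveOneOutGap_le {I : Type*} [Fintype I] [Nonempty I] (hn : 0 < n) (hR : 0 ≤ R)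
    (hlam : 0 < lam) {z : I → Pt d} (hz : ∀ i, IsRegularPt ℓ L R (z i))
    (he : ∀ S, IsProx (empRisk ℓ S) lam h (e S)) :
    𝔼 τ : Fin (n + 1) → I, leaveOneOutGap ℓ lam h e (z ∘ τ) ≤ (L * R) ^ 2 / (n * lam) := by
  have hobjective (σ : Fin n → I) :
      ∑ j, ℓ ⟪(z (σ j)).1, e (z ∘ σ)⟫_ℝ (z (σ j)).2 + n * lam / 2 * ‖e (z ∘ σ) - h‖ ^ 2
        = n * regRisk ℓ lam (z ∘ σ) h (e (z ∘ σ)) := by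
    rw [regRisk, mul_add, mul_empRisk hn]
    simp only [Function.comp_apply]
    ring
  have hloo := expect_loss_le_expect_objective hn hR (fun i => (hz i).norm_le)
    (fun i => (hz i).convex) (fun i => (hz i).nonneg) (fun i => (hz i).lipschitz)
    (by positivity : 0 < n * lam) (wS := fun σ => e (z ∘ σ)) (h := h) fun σ => by
      have := (he (z ∘ σ)).mul n.cast_nonneg
      simp only [mul_empRisk hn] at this
      exact this
  simp_rw [hobjective, ← mul_expect] at hloo
  rw [inv_mul_cancel_left₀ (by positivity)] at hloo
  have htail (i : I) (σ : Fin n → I) :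
      Fin.tail (z ∘ (0 : Fin (n + 1)).insertNth (α := fun _ => I) i σ) = z ∘ σ := by
    funext j
    simp [Fin.tail]
  rw [expect_eq_expect_insertNth 0]
  simp_rw [leaveOneOutGap, htail, expect_sub_distrib, Fintype.expect_const]
  simp only [Function.comp_apply, Fin.insertNth_apply_same]
  linarith

end BiasedERM

section Sampling

open Filter Topology
open scoped BigOperators

lemma card_injective_fin (k N : ℕ) :
    ({τ : Fin k → Fin N | Function.Injective τ} : Finset _).card = N.descFactorial k := by
  rw [← Fintype.card_subtype, Fintype.card_congr (Equiv.subtypeInjectiveEquivEmbedding _ _),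
    Fintype.card_embedding_eq, Fintype.card_fin, Fintype.card_fin]

lemma card_not_injective_fin (k N : ℕ) :
    (({τ : Fin k → Fin N | ¬Function.Injective τ} : Finset _).card : ℝ)
      = N ^ k - N.descFactorial k := by
  rw [eq_sub_iff_add_eq', ← card_injective_fin]
  have := Finset.card_filter_add_card_filter_not (s := (Finset.univ : Finset (Fin k → Fin N)))
    Function.Injective
  simp only [Finset.card_univ, Fintype.card_fun, Fintype.card_fin] at this
  exact_mod_cast this

lemma tendsto_descFactorial_div_pow (k : ℕ) :
    Tendsto (fun N : ℕ => (N.descFactorial k : ℝ) / N ^ k) atTop (𝓝 1) := by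
  refine (Asymptotics.isEquivalent_iff_tendsto_one ?_).1 (isEquivalent_descFactorial k)
  filter_upwards [eventually_gt_atTop 0] with N hN
  positivity

lemma sum_injective_comp_le {Z : Type*} {k N : ℕ} {g : (Fin k → Z) → ℝ} {f : Z → ℝ}
    {p : Z → Prop} {c : ℝ} (hgf : ∀ ζ, (∀ j, p (ζ j)) → -∑ j, f (ζ j) ≤ g ζ) (hN : 0 < N)
    {z : Fin N → Z} (hz : ∀ i, p (z i)) (hc : 𝔼 τ : Fin k → Fin N, g (z ∘ τ) ≤ c) :
    ∑ τ : Fin k → Fin N with Function.Injective τ, g (z ∘ τ)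
      ≤ N ^ k * c + ∑ τ : Fin k → Fin N with ¬Function.Injective τ, ∑ j, f (z (τ j)) := by
  have : Nonempty (Fin N) := ⟨⟨0, hN⟩⟩
  rw [Fintype.expect_eq_sum_div_card, div_le_iff₀' (by positivity),
    ← Finset.sum_filter_add_sum_filter_not _ Function.Injective] at hc
  have hcollide := Finset.sum_le_sum fun τ
    (_ : τ ∈ ({τ : Fin k → Fin N | ¬Function.Injective τ} : Finset _)) =>
    hgf (z ∘ τ) fun j => hz (τ j)
  rw [Finset.sum_neg_distrib] at hcollide
  simp only [Fintype.card_fun, Fintype.card_fin, Nat.cast_pow, Function.comp_apply] at hc hcollide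
  linarith

variable {Ω Z : Type*} [MeasurableSpace Ω] [MeasurableSpace Z] {P : Measure Ω} {μ : Measure Z}

lemma integral_comp_of_measurePreserving {f : Ω → Z} (hf : MeasurePreserving f P μ) {g : Z → ℝ}
    (hg : AEStronglyMeasurable g μ) : ∫ ω, g (f ω) ∂P = ∫ z, g z ∂μ := by
  rw [← hf.map_eq] at hg ⊢
  exact (integral_map hf.aemeasurable hg).symm

section Caratheodory

variable {X E : Type*} [TopologicalSpace E] [TopologicalSpace.PseudoMetrizableSpace E]
  {φ : X → Z → E} {f : Ω → Z}

lemma aestronglyMeasurable_comp_simpleFunc (hφ : ∀ v, AEStronglyMeasurable (φ v) μ)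
    (hf : Measure.QuasiMeasurePreserving f P μ) (s : SimpleFunc Ω X) :
    AEStronglyMeasurable (fun ω => φ (s ω) (f ω)) P := by
  have hcover : ⋃ v : s.range, s ⁻¹' {v.1} = Set.univ :=
    Set.eq_univ_of_forall fun ω => Set.mem_iUnion.2 ⟨⟨s ω, s.mem_range_self ω⟩, rfl⟩
  rw [← Measure.restrict_univ (μ := P), ← hcover, aestronglyMeasurable_iUnion_iff]
  intro v
  refine ((hφ v).comp_quasiMeasurePreserving hf).restrict.congr ?_
  filter_upwards [ae_restrict_mem (s.measurableSet_fiber v.1)] with ω hω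
  exact congrArg (φ · (f ω)) (Eq.symm hω)

lemma aestronglyMeasurable_comp_of_ae_continuous [TopologicalSpace X]
    (hcont : ∀ᵐ z ∂μ, Continuous fun v => φ v z)
    (hφ : ∀ v, AEStronglyMeasurable (φ v) μ) (hf : Measure.QuasiMeasurePreserving f P μ)
    {e : Ω → X} (he : AEStronglyMeasurable e P) :
    AEStronglyMeasurable (fun ω => φ (e ω) (f ω)) P := by
  refine aestronglyMeasurable_of_tendsto_ae atTop
    (fun k => aestronglyMeasurable_comp_simpleFunc hφ hf (he.stronglyMeasurable_mk.approx k)) ?_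
  filter_upwards [hf.ae hcont, he.ae_eq_mk] with ω hω heω
  rw [heω]
  exact (hω.tendsto _).comp (he.stronglyMeasurable_mk.tendsto_approx ω)

end Caratheodory

variable [IsProbabilityMeasure μ]

lemma ae_pi_forall {α : Type*} [Fintype α] {p : Z → Prop} (hp : ∀ᵐ z ∂μ, p z) :
    ∀ᵐ ζ ∂(Measure.pi fun _ : α => μ), ∀ j, p (ζ j) :=
  ae_all_iff.2 fun j => (measurePreserving_eval (fun _ : α => μ) j).quasiMeasurePreserving.ae hp

lemma measurePreserving_comp_injective {α β : Type*} [Fintype α] [Fintype β] {τ : α → β}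
    (hτ : Function.Injective τ) :
    MeasurePreserving (fun z : β → Z => z ∘ τ) (Measure.pi fun _ => μ) (Measure.pi fun _ => μ) := by
  refine ⟨by fun_prop, ?_⟩
  have hindep := (ProbabilityTheory.iIndepFun_pi (X := fun (_ : β) (x : Z) => x)
    (μ := fun _ : β => μ) fun _ => aemeasurable_id).precomp hτ
  rw [ProbabilityTheory.iIndepFun_iff_map_fun_eq_pi_map
    (fun i => (measurable_pi_apply (τ i)).aemeasurable)] at hindep
  refine hindep.trans (congrArg Measure.pi ?_)
  funext i
  exact (measurePreserving_eval (fun _ : β => μ) (τ i)).map_eq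

variable {k : ℕ} {g : (Fin k → Z) → ℝ} {f : Z → ℝ} {p : Z → Prop} {c : ℝ}

lemma descFactorial_mul_integral_pi_le (hg : Integrable g (Measure.pi fun _ => μ))
    (hf : Integrable f μ) (hp : ∀ᵐ z ∂μ, p z)
    (hgf : ∀ ζ, (∀ j, p (ζ j)) → -∑ j, f (ζ j) ≤ g ζ) {N : ℕ} (hN : 0 < N)
    (hc : ∀ z : Fin N → Z, (∀ i, p (z i)) → 𝔼 τ : Fin k → Fin N, g (z ∘ τ) ≤ c) :
    N.descFactorial k * ∫ ζ, g ζ ∂(Measure.pi fun _ => μ)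
      ≤ N ^ k * c + (N ^ k - N.descFactorial k) * (k * ∫ z, f z ∂μ) := by
  have hgτ (τ : Fin k → Fin N) (hτ : τ ∈ ({τ | Function.Injective τ} : Finset _)) :=
    measurePreserving_comp_injective (μ := μ) (Finset.mem_filter.1 hτ).2
  have heval (i : Fin N) := measurePreserving_eval (fun _ : Fin N => μ) i
  have hgint (τ) (hτ) : Integrable (fun z : Fin N → Z => g (z ∘ τ)) _ :=
    (hgτ τ hτ).integrable_comp_of_integrable hg
  have hfint (i : Fin N) : Integrable (fun z => f (z i)) (Measure.pi fun _ => μ) :=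
    (heval i).integrable_comp_of_integrable hf
  have hfsum (τ : Fin k → Fin N) := integrable_finsetSum Finset.univ fun j _ => hfint (τ j)
  have hgmean (τ) (hτ) : ∫ z : Fin N → Z, g (z ∘ τ) ∂(Measure.pi fun _ => μ) = _ :=
    integral_comp_of_measurePreserving (hgτ τ hτ) hg.aestronglyMeasurable
  have hfmean (τ : Fin k → Fin N) :
      ∫ z, ∑ j, f (z (τ j)) ∂(Measure.pi fun _ => μ) = k * ∫ z, f z ∂μ := by
    rw [integral_finsetSum _ fun j _ => hfint (τ j)]
    have := fun i => integral_comp_of_measurePreserving (heval i) hf.aestronglyMeasurable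
    simp only [Function.eval] at this
    simp [this]
  have hle := integral_mono_ae (integrable_finsetSum _ hgint)
    ((integrable_const (N ^ k * c)).add (integrable_finsetSum _ fun τ _ => hfsum τ))
    ((ae_pi_forall hp).mono fun z hz => sum_injective_comp_le hgf hN hz (hc z hz))
  rw [integral_add' (integrable_const _) (integrable_finsetSum _ fun τ _ => hfsum τ),
    integral_finsetSum _ hgint, integral_finsetSum _ fun τ _ => hfsum τ,
    Finset.sum_congr rfl hgmean, Finset.sum_congr rfl fun τ _ => hfmean τ] at hle
  simpa [card_injective_fin, card_not_injective_fin] using hle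

/-- A tuple drawn with replacement from `N` i.i.d. points is itself i.i.d. unless it has a
repetition, and the proportion of tuples with a repetition tends to `0`. -/
lemma integral_pi_le_of_expect_le (hg : Integrable g (Measure.pi fun _ => μ))
    (hf : Integrable f μ) (hp : ∀ᵐ z ∂μ, p z)
    (hgf : ∀ ζ, (∀ j, p (ζ j)) → -∑ j, f (ζ j) ≤ g ζ)
    (hc : ∀ N (z : Fin N → Z), 0 < N → (∀ i, p (z i)) → 𝔼 τ : Fin k → Fin N, g (z ∘ τ) ≤ c) :
    ∫ ζ, g ζ ∂(Measure.pi fun _ => μ) ≤ c := by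
  set G := ∫ ζ, g ζ ∂(Measure.pi fun _ : Fin k => μ)
  set C := k * ∫ z, f z ∂μ
  have hratio := tendsto_descFactorial_div_pow k
  have hlower := hratio.mul_const G
  have hupper := ((hratio.const_sub 1).mul_const C).const_add c
  rw [one_mul] at hlower
  rw [sub_self, zero_mul, add_zero] at hupper
  refine le_of_tendsto_of_tendsto hlower hupper ?_
  filter_upwards [eventually_gt_atTop 0] with N hN
  have hN' : (0 : ℝ) < N ^ k := by positivity
  have hle : N.descFactorial k * G ≤ N ^ k * c + (N ^ k - N.descFactorial k) * C :=
    descFactorial_mul_integral_pi_le hg hf hp hgf hN fun z hz => hc N z hN hz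
  rw [div_mul_eq_mul_div, div_le_iff₀ hN']
  refine hle.trans_eq ?_
  field_simp

end Sampling

section Generalization

variable {d n : ℕ} {ℓ : ℝ → ℝ → ℝ} {L R lam : ℝ} {μ : Measure (Pt d)}

lemma aestronglyMeasurable_loss {Ω : Type*} [MeasurableSpace Ω] {P : Measure Ω}
    (hreg : ∀ᵐ z ∂μ, IsRegularPt ℓ L R z)
    (hint : ∀ w, Integrable (fun z : Pt d => ℓ ⟪z.1, w⟫_ℝ z.2) μ) {f : Ω → Pt d}
    (hf : Measure.QuasiMeasurePreserving f P μ) {e : Ω → Vec d} (he : AEStronglyMeasurable e P) :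
    AEStronglyMeasurable (fun ω => ℓ ⟪(f ω).1, e ω⟫_ℝ (f ω).2) P :=
  aestronglyMeasurable_comp_of_ae_continuous (φ := fun w z => ℓ ⟪z.1, w⟫_ℝ z.2)
    (hreg.mono fun _ hz => hz.continuous_loss) (fun w => (hint w).aestronglyMeasurable) hf he

variable [IsProbabilityMeasure μ]

lemma integrable_empRisk (hint : ∀ w, Integrable (fun z : Pt d => ℓ ⟪z.1, w⟫_ℝ z.2) μ)
    (w : Vec d) : Integrable (fun S => empRisk ℓ S w) (Measure.pi fun _ : Fin n => μ) :=
  (integrable_finsetSum _ fun k _ =>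
    (measurePreserving_eval (fun _ => μ) k).integrable_comp_of_integrable (hint w)).const_mul _

lemma integral_empRisk (hn : 0 < n)
    (hint : ∀ w, Integrable (fun z : Pt d => ℓ ⟪z.1, w⟫_ℝ z.2) μ) (w : Vec d) :
    ∫ S, empRisk ℓ S w ∂(Measure.pi fun _ : Fin n => μ) = trueRisk ℓ μ w := by
  have heval (k : Fin n) := measurePreserving_eval (fun _ => μ) k
  have hmean (k : Fin n) : ∫ S, ℓ ⟪(S k).1, w⟫_ℝ (S k).2 ∂(Measure.pi fun _ => μ)
      = trueRisk ℓ μ w :=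
    integral_comp_of_measurePreserving (heval k) (hint w).aestronglyMeasurable
  have hint' (k : Fin n) : Integrable (fun S => ℓ ⟪(S k).1, w⟫_ℝ (S k).2)
      (Measure.pi fun _ => μ) := (heval k).integrable_comp_of_integrable (hint w)
  simp only [empRisk]
  rw [integral_const_mul, integral_finsetSum _ fun k _ => hint' k]
  simp [hmean, hn.ne']

section IsProx

variable {h : Vec d} {e : (Fin n → Pt d) → Vec d} (hreg : ∀ᵐ z ∂μ, IsRegularPt ℓ L R z)
  (hint : ∀ w, Integrable (fun z : Pt d => ℓ ⟪z.1, w⟫_ℝ z.2) μ) (hem : Measurable e)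
  (he : ∀ S, IsProx (empRisk ℓ S) lam h (e S))
include hreg hint hem he

lemma integrable_regRisk_of_isProx (hlam : 0 ≤ lam) :
    Integrable (fun S => regRisk ℓ lam S h (e S)) (Measure.pi fun _ : Fin n => μ) := by
  refine (integrable_empRisk hint h).mono' ?_ ?_
  · have hloss (k : Fin n) := aestronglyMeasurable_loss hreg hint
      (measurePreserving_eval (fun _ : Fin n => μ) k).quasiMeasurePreserving
      hem.aestronglyMeasurable
    have hpenalty : Measurable fun S => lam / 2 * ‖e S - h‖ ^ 2 := by fun_prop
    exact ((Finset.aestronglyMeasurable_fun_sum _ fun k _ => hloss k).const_mul _).add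
      hpenalty.aestronglyMeasurable
  · filter_upwards [ae_pi_forall hreg] with S hS
    have hnonneg : 0 ≤ regRisk ℓ lam S h (e S) :=
      add_nonneg (empRisk_nonneg hS _) (by positivity)
    rw [Real.norm_of_nonneg hnonneg]
    simpa [regRisk] using he S h

lemma integrable_loss_of_isProx (hn : 0 < n) (hL : 0 ≤ L) (hR : 0 ≤ R) (hlam : 0 < lam) :
    Integrable (fun ζ : Fin (n + 1) → Pt d => ℓ ⟪(ζ 0).1, e (Fin.tail ζ)⟫_ℝ (ζ 0).2)
      (Measure.pi fun _ => μ) := by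
  have heval := measurePreserving_eval (fun _ : Fin (n + 1) => μ) 0
  have hbase : Integrable (fun ζ : Fin (n + 1) → Pt d => ℓ ⟪(ζ 0).1, h⟫_ℝ (ζ 0).2)
      (Measure.pi fun _ => μ) := heval.integrable_comp_of_integrable (hint h)
  have htail : Measurable fun ζ : Fin (n + 1) → Pt d => Fin.tail ζ :=
    measurable_pi_lambda _ fun j => measurable_pi_apply _
  refine (hbase.norm.add (integrable_const (L * R * (L * R / lam)))).mono'
    (aestronglyMeasurable_loss hreg hint heval.quasiMeasurePreserving
      (hem.comp htail).aestronglyMeasurable) ?_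
  filter_upwards [ae_pi_forall hreg] with ζ hζ
  have htrain : ∀ k, IsRegularPt ℓ L R (Fin.tail ζ k) := fun k => hζ k.succ
  have hdist : ‖e (Fin.tail ζ) - h‖ ≤ L * R / lam :=
    (le_div_iff₀' hlam).2 ((he _).mul_norm_sub_le (convexOn_empRisk htrain) (by positivity)
      (empRisk_sub_le htrain hn hL))
  calc ‖ℓ ⟪(ζ 0).1, e (Fin.tail ζ)⟫_ℝ (ζ 0).2‖
      ≤ ‖ℓ ⟪(ζ 0).1, h⟫_ℝ (ζ 0).2‖
        + ‖ℓ ⟪(ζ 0).1, e (Fin.tail ζ)⟫_ℝ (ζ 0).2 - ℓ ⟪(ζ 0).1, h⟫_ℝ (ζ 0).2‖ := norm_le_insert' _ _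
    _ ≤ ‖ℓ ⟪(ζ 0).1, h⟫_ℝ (ζ 0).2‖ + L * R * (L * R / lam) := by
      gcongr
      exact ((hζ 0).abs_loss_sub_le hL _ _).trans (by gcongr)

lemma integral_loss_eq_integral_trueRisk (hn : 0 < n) (hL : 0 ≤ L) (hR : 0 ≤ R) (hlam : 0 < lam) :
    ∫ ζ : Fin (n + 1) → Pt d, ℓ ⟪(ζ 0).1, e (Fin.tail ζ)⟫_ℝ (ζ 0).2 ∂(Measure.pi fun _ => μ)
      = ∫ S, trueRisk ℓ μ (e S) ∂(Measure.pi fun _ : Fin n => μ) := by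
  have hsplit := measurePreserving_piFinSuccAbove (fun _ : Fin (n + 1) => μ) 0
  have hemb := (MeasurableEquiv.piFinSuccAbove (fun _ : Fin (n + 1) => Pt d) 0).measurableEmbedding
  set g : Pt d × (Fin n → Pt d) → ℝ := fun p => ℓ ⟪p.1.1, e p.2⟫_ℝ p.1.2 with hg
  have hcomp : (fun ζ : Fin (n + 1) → Pt d => ℓ ⟪(ζ 0).1, e (Fin.tail ζ)⟫_ℝ (ζ 0).2)
      = fun ζ => g (MeasurableEquiv.piFinSuccAbove (fun _ => Pt d) 0 ζ) := by
    funext ζ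
    simp [hg, MeasurableEquiv.piFinSuccAbove, Fin.insertNthEquiv]
  have hloss : Integrable (g ∘ MeasurableEquiv.piFinSuccAbove (fun _ => Pt d) 0)
      (Measure.pi fun _ => μ) :=
    (integrable_loss_of_isProx hreg hint hem he hn hL hR hlam).congr
      (ae_of_all _ (congrFun hcomp))
  rw [hcomp, hsplit.integral_comp hemb,
    integral_prod_symm _ ((hsplit.integrable_comp_emb hemb).1 hloss)]
  rfl

lemma integral_trueRisk_le_integral_regRisk_add (hn : 0 < n) (hL : 0 ≤ L) (hR : 0 ≤ R)
    (hlam : 0 < lam) :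
    ∫ S, trueRisk ℓ μ (e S) ∂(Measure.pi fun _ : Fin n => μ)
      ≤ ∫ S, regRisk ℓ lam S h (e S) ∂(Measure.pi fun _ : Fin n => μ)
        + (L * R) ^ 2 / (n * lam) := by
  have htail := measurePreserving_comp_injective (μ := μ) (Fin.succ_injective n)
  have hloss := integrable_loss_of_isProx hreg hint hem he hn hL hR hlam
  have hobj := integrable_regRisk_of_isProx hreg hint hem he hlam.le
  have hobj' : Integrable (fun ζ => regRisk ℓ lam (Fin.tail ζ) h (e (Fin.tail ζ)))
      (Measure.pi fun _ : Fin (n + 1) => μ) := htail.integrable_comp_of_integrable hobj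
  have hmean : ∫ ζ, leaveOneOutGap ℓ lam h e ζ ∂(Measure.pi fun _ => μ)
      = ∫ S, trueRisk ℓ μ (e S) ∂(Measure.pi fun _ : Fin n => μ)
        - ∫ S, regRisk ℓ lam S h (e S) ∂(Measure.pi fun _ : Fin n => μ) := by
    rw [← integral_loss_eq_integral_trueRisk hreg hint hem he hn hL hR hlam,
      ← integral_comp_of_measurePreserving htail hobj.aestronglyMeasurable]
    exact integral_sub hloss hobj'
  have hlower (ζ : Fin (n + 1) → Pt d) (hζ : ∀ j, IsRegularPt ℓ L R (ζ j)) :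
      -∑ j, ℓ ⟪(ζ j).1, h⟫_ℝ (ζ j).2 ≤ leaveOneOutGap ℓ lam h e ζ := by
    have hmin : regRisk ℓ lam (Fin.tail ζ) h (e (Fin.tail ζ)) ≤ empRisk ℓ (Fin.tail ζ) h := by
      simpa [regRisk] using he (Fin.tail ζ) h
    have hsum : empRisk ℓ (Fin.tail ζ) h ≤ ∑ k, ℓ ⟪(Fin.tail ζ k).1, h⟫_ℝ (Fin.tail ζ k).2 :=
      mul_le_of_le_one_left (Finset.sum_nonneg fun k _ => (hζ k.succ).nonneg _)
        (inv_le_one_of_one_le₀ (by exact_mod_cast hn))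
    have := (hζ 0).nonneg ⟪(ζ 0).1, h⟫_ℝ
    have := (hζ 0).nonneg ⟪(ζ 0).1, e (Fin.tail ζ)⟫_ℝ
    rw [Fin.sum_univ_succ, leaveOneOutGap]
    simp only [Fin.tail] at *
    linarith
  have hgap := integral_pi_le_of_expect_le (c := (L * R) ^ 2 / (n * lam)) (hloss.sub hobj')
    (hint h) hreg hlower fun N z hN hz => by
      have : Nonempty (Fin N) := ⟨⟨0, hN⟩⟩
      exact expect_leaveOneOutGap_le hn hR hlam hz he
  exact sub_le_iff_le_add'.1 (hmean ▸ hgap)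

end IsProx

end Generalization

section MonotoneMaps

open Filter Topology

variable {V : Type*} [NormedAddCommGroup V] [InnerProductSpace ℝ V]

section Dense

variable {E : V → V} {D : Set V} (hD : Dense D) (hmono : ∀ a b, 0 ≤ ⟪E a - E b, a - b⟫_ℝ)
include hD hmono

lemma norm_sub_le_of_monotone_of_dense {b y : V} (hE : ∀ c ∈ D, ‖E c - y‖ ≤ ‖c - b‖) (a : V) :
    ‖E a - y‖ ≤ ‖a - b‖ := by
  have hdense (c : V) : ⟪E a - y, c - a⟫_ℝ ≤ ‖c - b‖ * ‖c - a‖ := by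
    refine closure_minimal (s := D) (t := {c | ⟪E a - y, c - a⟫_ℝ ≤ ‖c - b‖ * ‖c - a‖})
      (fun c hc => ?_) (isClosed_le (by fun_prop) (by fun_prop)) (hD c)
    calc ⟪E a - y, c - a⟫_ℝ
        = ⟪E c - y, c - a⟫_ℝ - ⟪E c - E a, c - a⟫_ℝ := by
          rw [← inner_sub_left, sub_sub_sub_cancel_left]
      _ ≤ ⟪E c - y, c - a⟫_ℝ := sub_le_self _ (hmono c a)
      _ ≤ ‖c - b‖ * ‖c - a‖ := (real_inner_le_norm _ _).trans (by gcongr; exact hE c hc)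
  rcases (norm_nonneg (E a - y)).eq_or_lt with hzero | hpos
  · exact hzero ▸ norm_nonneg _
  have hray : ∀ r ∈ Set.Ioi (0 : ℝ), ‖E a - y‖ ≤ ‖a + r • (E a - y) - b‖ := by
    intro r (hr : 0 < r)
    have := hdense (a + r • (E a - y))
    rw [add_sub_cancel_left, inner_smul_right, real_inner_self_eq_norm_sq, norm_smul,
      Real.norm_of_nonneg hr.le] at this
    refine le_of_mul_le_mul_right ?_ (mul_pos hr hpos)
    linarith
  have hlim : Tendsto (fun r : ℝ => ‖a + r • (E a - y) - b‖) (𝓝[>] 0) (𝓝 ‖a - b‖) :=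
    tendsto_nhdsWithin_of_tendsto_nhds (Continuous.tendsto' (by fun_prop) _ _ (by simp))
  exact ge_of_tendsto hlim (mem_of_superset self_mem_nhdsWithin hray)

lemma lipschitzWith_one_of_monotone_of_dense (hE : LipschitzOnWith 1 E D) : LipschitzWith 1 E := by
  have hE' : ∀ c ∈ D, ∀ c' ∈ D, ‖E c - E c'‖ ≤ ‖c - c'‖ := fun c hc c' hc' => by
    simpa using lipschitzOnWith_iff_norm_sub_le.1 hE hc hc'
  refine lipschitzWith_iff_norm_sub_le.2 fun a b => ?_
  rw [NNReal.coe_one, one_mul]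
  refine norm_sub_le_of_monotone_of_dense hD hmono (fun c hc => ?_) a
  rw [norm_sub_rev, norm_sub_rev c]
  exact norm_sub_le_of_monotone_of_dense hD hmono (fun c' hc' => hE' c' hc' c hc) b

end Dense

variable {Ω : Type*} {E : V → Ω → V} {κ C : ℝ}

/-- A random map `E` is tame at `ω` if it is nonexpansive there and displaces no point by more than
`C / κ`. For the biased ERM, with `C = L R`, this says that the meta-gradient is continuous in the
bias and bounded. -/
def IsTame (E : V → Ω → V) (κ C : ℝ) (ω : Ω) : Prop :=
  LipschitzWith 1 (fun a => E a ω) ∧ ∀ a, κ * ‖E a ω - a‖ ≤ C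

lemma isTame_iff_of_dense {ι : Type*} {D : ι → V} (hD : DenseRange D) {ω : Ω}
    (hmono : ∀ a b, 0 ≤ ⟪E a ω - E b ω, a - b⟫_ℝ) :
    IsTame E κ C ω ↔ (∀ i j, ‖E (D i) ω - E (D j) ω‖ ≤ ‖D i - D j‖)
      ∧ ∀ i, κ * ‖E (D i) ω - D i‖ ≤ C := by
  refine ⟨fun hω => ⟨fun i j => ?_, fun i => hω.2 _⟩, fun ⟨hdist, hdisp⟩ => ?_⟩
  · simpa using hω.1.norm_sub_le (D i) (D j)
  · have hlip : LipschitzWith 1 fun a => E a ω :=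
      lipschitzWith_one_of_monotone_of_dense hD hmono (lipschitzOnWith_iff_norm_sub_le.2 (by
        rintro _ ⟨i, rfl⟩ _ ⟨j, rfl⟩
        simpa using hdist i j))
    have hcont := hlip.continuous
    exact ⟨hlip, fun a => hD.induction_on (p := fun a => κ * ‖E a ω - a‖ ≤ C) a
      (isClosed_le (by fun_prop) continuous_const) hdisp⟩

lemma measurableSet_isTame [MeasurableSpace V] [BorelSpace V] [SecondCountableTopology V]
    [MeasurableSpace Ω] (hE : ∀ a, Measurable (E a))
    (hmono : ∀ ω a b, 0 ≤ ⟪E a ω - E b ω, a - b⟫_ℝ) : MeasurableSet {ω | IsTame E κ C ω} := by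
  simp_rw [fun ω => isTame_iff_of_dense (κ := κ) (C := C)
    (TopologicalSpace.denseRange_denseSeq V) (hmono ω), Set.ofPred_and, Set.ofPred_forall]
  refine .inter (.iInter fun i => .iInter fun j => ?_) (.iInter fun i => ?_)
  · exact measurableSet_le ((hE _).sub (hE _)).norm measurable_const
  · exact measurableSet_le (((hE _).sub_const _).norm.const_mul κ) measurable_const

end MonotoneMaps

section StochasticGradientDescent

open Finset

variable {V X : Type*} [NormedAddCommGroup V] [InnerProductSpace ℝ V] {T : ℕ}
  {G : V → X → V} {γ C : ℝ} {h : (Fin T → X) → ℕ → V}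

/-- `h ω 0, …, h ω T` are the iterates of stochastic gradient descent with step size `γ`, started
at the origin, where `G v x` is the stochastic gradient at `v` given by the sample `x` and `ω t` is
the sample of step `t`. The values `h ω t` with `T < t` are irrelevant. -/
structure IsSGD (G : V → X → V) (γ : ℝ) (h : (Fin T → X) → ℕ → V) : Prop where
  zero : ∀ ω, h ω 0 = 0
  succ : ∀ ω (t : Fin T), h ω (t + 1) = h ω t - γ • G (h ω t) (ω t)

namespace IsSGD

variable (hh : IsSGD G γ h)
include hh

lemma update_eq {t : Fin T} (ω : Fin T → X) (x : X) {s : ℕ} (hs : s ≤ t) :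
    h (Function.update ω t x) s = h ω s := by
  induction s with
  | zero => rw [hh.zero, hh.zero]
  | succ s ih =>
    have hst : (⟨s, by lia⟩ : Fin T) ≠ t := Fin.ne_of_lt hs
    have hnext := fun ω => hh.succ ω ⟨s, by lia⟩
    simp only at hnext
    rw [hnext, hnext, ih (by lia), Function.update_of_ne hst]

section Bounded

variable {ω : Fin T → X} (hC : ∀ v t, ‖G v (ω t)‖ ≤ C)
include hC

lemma norm_le (hγ : 0 ≤ γ) {s : ℕ} (hs : s ≤ T) : ‖h ω s‖ ≤ s * (γ * C) := by
  induction s with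
  | zero => simp [hh.zero]
  | succ s ih =>
    calc ‖h ω (s + 1)‖ = ‖h ω s - γ • G (h ω s) (ω ⟨s, hs⟩)‖ := by rw [hh.succ ω ⟨s, hs⟩]
      _ ≤ ‖h ω s‖ + γ * ‖G (h ω s) (ω ⟨s, hs⟩)‖ := by
        rw [← norm_smul_of_nonneg hγ]
        exact norm_sub_le _ _
      _ ≤ s * (γ * C) + γ * C := by
        gcongr
        exacts [ih (by lia), hC _ _]
      _ = (s + 1 : ℕ) * (γ * C) := by
        push_cast
        ring

lemma inner_le (hγ : 0 < γ) (m : V) (t : Fin T) :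
    ⟪G (h ω t) (ω t), h ω t - m⟫_ℝ
      ≤ (‖h ω t - m‖ ^ 2 - ‖h ω (t + 1) - m‖ ^ 2) / (2 * γ) + γ * C ^ 2 / 2 := by
  have hdescent : ‖h ω (t + 1) - m‖ ^ 2
      = ‖h ω t - m‖ ^ 2 - 2 * (γ * ⟪G (h ω t) (ω t), h ω t - m⟫_ℝ)
        + γ ^ 2 * ‖G (h ω t) (ω t)‖ ^ 2 := by
    rw [hh.succ, sub_right_comm, norm_sub_sq_real, inner_smul_right, real_inner_comm, norm_smul,
      mul_pow, Real.norm_eq_abs, sq_abs]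
  have hbound : γ ^ 2 * ‖G (h ω t) (ω t)‖ ^ 2 ≤ γ ^ 2 * C ^ 2 := by
    gcongr
    exact hC _ _
  rw [← sub_le_iff_le_add, le_div_iff₀ (by positivity)]
  linarith

lemma sum_inner_le (hγ : 0 < γ) (m : V) :
    ∑ t : Fin T, ⟪G (h ω t) (ω t), h ω t - m⟫_ℝ ≤ ‖m‖ ^ 2 / (2 * γ) + γ * T * C ^ 2 / 2 := by
  have htelescope : ∑ t : Fin T, (‖h ω t - m‖ ^ 2 - ‖h ω (t + 1) - m‖ ^ 2) ≤ ‖m‖ ^ 2 := by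
    rw [Fin.sum_univ_eq_sum_range (fun t => ‖h ω t - m‖ ^ 2 - ‖h ω (t + 1) - m‖ ^ 2),
      sum_range_sub', hh.zero, zero_sub, norm_neg]
    exact sub_le_self _ (sq_nonneg _)
  calc ∑ t : Fin T, ⟪G (h ω t) (ω t), h ω t - m⟫_ℝ
      ≤ ∑ t : Fin T, ((‖h ω t - m‖ ^ 2 - ‖h ω (t + 1) - m‖ ^ 2) / (2 * γ) + γ * C ^ 2 / 2) :=
        sum_le_sum fun t _ => hh.inner_le hC hγ m t
    _ = (∑ t : Fin T, (‖h ω t - m‖ ^ 2 - ‖h ω (t + 1) - m‖ ^ 2)) / (2 * γ)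
        + γ * T * C ^ 2 / 2 := by
      rw [sum_add_distrib, ← sum_div, sum_const, card_univ, Fintype.card_fin, nsmul_eq_mul]
      ring
    _ ≤ ‖m‖ ^ 2 / (2 * γ) + γ * T * C ^ 2 / 2 := by gcongr

end Bounded

end IsSGD

variable [MeasurableSpace X] {ν : Measure X} [IsProbabilityMeasure ν]

lemma measurePreserving_update {ι : Type*} [Fintype ι] [DecidableEq ι] (t : ι) :
    MeasurePreserving (fun p : (ι → X) × X => Function.update p.1 t p.2)
      ((Measure.pi fun _ => ν).prod ν) (Measure.pi fun _ => ν) := by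
  have hmeas : Measurable fun p : (ι → X) × X => Function.update p.1 t p.2 := measurable_update'
  refine ⟨hmeas, (Measure.pi_eq fun s hs => ?_).symm⟩
  have hpre : (fun p : (ι → X) × X => Function.update p.1 t p.2) ⁻¹' Set.univ.pi s
      = Set.univ.pi (Function.update s t Set.univ) ×ˢ s t := by
    ext p
    rw [Set.mem_preimage, Set.mem_univ_pi, Set.mem_prod, Set.mem_univ_pi,
      Function.forall_update_iff p.1 (p := fun i y => y ∈ s i),
      Function.forall_update_iff s (p := fun i A => p.1 i ∈ A)]
    simp only [Set.mem_univ, true_and]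
    exact and_comm
  rw [Measure.map_apply hmeas (MeasurableSet.univ_pi hs), hpre, Measure.prod_prod, Measure.pi_pi,
    mul_comm, ← mul_prod_erase _ _ (mem_univ t),
    ← mul_prod_erase _ (fun i => ν (s i)) (mem_univ t), Function.update_self, measure_univ, one_mul]
  congr 1
  exact prod_congr rfl fun i hi => by rw [Function.update_of_ne (ne_of_mem_erase hi)]

namespace IsSGD

variable (hh : IsSGD G γ h) (hG : ∀ v, AEStronglyMeasurable (G v) ν)
  (hcont : ∀ᵐ x ∂ν, Continuous (G · x))
include hh hG hcont

lemma aestronglyMeasurable {s : ℕ} (hs : s ≤ T) :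
    AEStronglyMeasurable (fun ω => h ω s) (Measure.pi fun _ => ν) := by
  induction s with
  | zero =>
    simp only [hh.zero]
    exact aestronglyMeasurable_const
  | succ s ih =>
    have hs' := ih (by lia)
    have hgrad := aestronglyMeasurable_comp_of_ae_continuous hcont hG
      (measurePreserving_eval (fun _ => ν) (⟨s, hs⟩ : Fin T)).quasiMeasurePreserving hs'
    refine (hs'.sub (hgrad.const_smul γ)).congr (ae_of_all _ fun ω => ?_)
    exact (hh.succ ω ⟨s, hs⟩).symm

variable (hC : ∀ᵐ x ∂ν, ∀ v, ‖G v x‖ ≤ C) (m : V)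
include hC

lemma integrable_inner (hγ : 0 ≤ γ) (t : Fin T) :
    Integrable (fun ω => ⟪G (h ω t) (ω t), h ω t - m⟫_ℝ) (Measure.pi fun _ => ν) := by
  have hiter := hh.aestronglyMeasurable hG hcont t.2.le
  have hgrad := aestronglyMeasurable_comp_of_ae_continuous hcont hG
    (measurePreserving_eval (fun _ => ν) t).quasiMeasurePreserving hiter
  refine (integrable_const (C * (t * (γ * C) + ‖m‖))).mono'
    (hgrad.inner (hiter.sub aestronglyMeasurable_const)) ?_
  filter_upwards [ae_pi_forall hC] with ω hω
  have hC0 : 0 ≤ C := (norm_nonneg _).trans (hω t 0)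
  calc ‖⟪G (h ω t) (ω t), h ω t - m⟫_ℝ‖
      ≤ ‖G (h ω t) (ω t)‖ * ‖h ω t - m‖ := norm_inner_le_norm _ _
    _ ≤ C * (t * (γ * C) + ‖m‖) := by
      gcongr
      · exact hω t _
      · exact (norm_sub_le _ _).trans
          (by gcongr; exact hh.norm_le (fun v t => hω t v) hγ t.2.le)

/-- The iterate `h ω t` does not depend on the sample `ω t`, so `ω t` may be resampled. -/
lemma integrable_prod_inner (hγ : 0 ≤ γ) (t : Fin T) :
    Integrable (fun p : (Fin T → X) × X => ⟪G (h p.1 t) p.2, h p.1 t - m⟫_ℝ)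
      ((Measure.pi fun _ => ν).prod ν) := by
  refine ((measurePreserving_update t).integrable_comp_of_integrable
    (hh.integrable_inner hG hcont hC m hγ t)).congr (ae_of_all _ fun p => ?_)
  simp [hh.update_eq p.1 p.2 le_rfl]

lemma integral_integral_inner (hγ : 0 ≤ γ) (t : Fin T) :
    ∫ ω, ∫ x, ⟪G (h ω t) x, h ω t - m⟫_ℝ ∂ν ∂(Measure.pi fun _ => ν)
      = ∫ ω, ⟪G (h ω t) (ω t), h ω t - m⟫_ℝ ∂(Measure.pi fun _ => ν) := by
  rw [← integral_prod _ (hh.integrable_prod_inner hG hcont hC m hγ t),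
    ← integral_comp_of_measurePreserving (measurePreserving_update t)
      (hh.integrable_inner hG hcont hC m hγ t).aestronglyMeasurable]
  simp only [hh.update_eq _ _ le_rfl, Function.update_self]

lemma integrable_sum_integral_inner (hγ : 0 ≤ γ) :
    Integrable (fun ω => ∑ t : Fin T, ∫ x, ⟪G (h ω t) x, h ω t - m⟫_ℝ ∂ν)
      (Measure.pi fun _ => ν) :=
  integrable_finsetSum _ fun t _ =>
    (hh.integrable_prod_inner hG hcont hC m hγ t).integral_prod_left

lemma integral_sum_integral_inner_le (hγ : 0 < γ) :
    ∫ ω, ∑ t : Fin T, ∫ x, ⟪G (h ω t) x, h ω t - m⟫_ℝ ∂ν ∂(Measure.pi fun _ => ν)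
      ≤ ‖m‖ ^ 2 / (2 * γ) + γ * T * C ^ 2 / 2 := by
  have hint := hh.integrable_inner hG hcont hC m hγ.le
  have hprod := hh.integrable_prod_inner hG hcont hC m hγ.le
  rw [integral_finsetSum _ fun t _ => (hprod t).integral_prod_left]
  simp_rw [hh.integral_integral_inner hG hcont hC m hγ.le]
  rw [← integral_finsetSum _ fun t _ => hint t]
  refine (integral_mono_ae (integrable_finsetSum _ fun t _ => hint t) (integrable_const _)
    ((ae_pi_forall hC).mono fun ω hω =>
      hh.sum_inner_le (fun v t => hω t v) hγ m)).trans_eq ?_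
  simp

end IsSGD

end StochasticGradientDescent

section Mixtures

open ProbabilityTheory

variable {Θ Ω : Type*} [MeasurableSpace Θ] [MeasurableSpace Ω] {ρ : Measure Θ} {P : Θ → Measure Ω}

lemma aemeasurable_of_bind_ne_zero (h : ρ.bind P ≠ 0) : AEMeasurable P ρ := by
  by_contra hP
  exact h (by rw [Measure.bind, Measure.map_of_not_aemeasurable hP, Measure.join_zero])

lemma measurePreserving_snd_bind_dirac_prod [∀ θ, SFinite (P θ)]
    (hP : AEMeasurable (fun θ => (Measure.dirac θ).prod (P θ)) ρ) :
    MeasurePreserving Prod.snd (ρ.bind fun θ => (Measure.dirac θ).prod (P θ)) (ρ.bind P) := by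
  refine ⟨measurable_snd, ?_⟩
  have hdirac : Measurable fun x : Θ × Ω => Measure.dirac x.2 :=
    Measure.measurable_dirac.comp measurable_snd
  rw [← Measure.bind_dirac_eq_map _ measurable_snd, Measure.bind_bind hP hdirac.aemeasurable]
  simp_rw [Measure.bind_dirac_eq_map _ measurable_snd]
  exact congrArg ρ.bind (funext fun θ => Measure.snd_prod)

variable (hP : AEMeasurable P ρ)
include hP

lemma ae_bind_of_ae_ae {p : Ω → Prop} (hp : MeasurableSet {x | p x})
    (h : ∀ᵐ θ ∂ρ, ∀ᵐ x ∂P θ, p x) : ∀ᵐ x ∂ρ.bind P, p x := by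
  rw [ae_iff, ← Set.compl_ofPred, Measure.bind_apply hp.compl hP]
  exact lintegral_eq_zero_of_ae_eq_zero h

variable {ψ : Ω → ℝ} (hψ : Integrable ψ (ρ.bind P))
include hψ

lemma integrable_integral_of_bind : Integrable (fun θ => ∫ x, ψ x ∂P θ) ρ := by
  let η : Kernel Θ Ω := ⟨hP.mk P, hP.measurable_mk⟩
  have hη : P =ᵐ[ρ] η := hP.ae_eq_mk
  rw [Measure.bind_congr_right hη, Measure.comp_eq_comp_const_apply] at hψ
  exact hψ.integral_comp.congr (hη.mono fun θ hθ => by simp only [hθ])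

lemma integral_integral_of_bind : ∫ θ, ∫ x, ψ x ∂P θ ∂ρ = ∫ x, ψ x ∂(ρ.bind P) := by
  let η : Kernel Θ Ω := ⟨hP.mk P, hP.measurable_mk⟩
  have hη : P =ᵐ[ρ] η := hP.ae_eq_mk
  rw [Measure.bind_congr_right hη, Measure.comp_eq_comp_const_apply] at hψ ⊢
  rw [Kernel.integral_comp hψ]
  exact integral_congr_ae (hη.mono fun θ hθ => by simp only [hθ])

end Mixtures

section MetaGradient

variable {V Ω : Type*} [NormedAddCommGroup V] [InnerProductSpace ℝ V] {E : V → Ω → V} {κ C : ℝ}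

/-- The meta-gradient at the bias `h` computed from the dataset `S` by the biased learner `E`. For
the biased ERM it is the gradient at `h` of the Moreau envelope `h ↦ min_w regRisk ℓ κ S h w`. -/
def metaGrad (κ : ℝ) (E : V → Ω → V) (h : V) (S : Ω) : V :=
  (-κ) • (E h S - h)

lemma IsTame.continuous_metaGrad {S : Ω} (hS : IsTame E κ C S) :
    Continuous fun h => metaGrad κ E h S :=
  (hS.1.continuous.sub continuous_id).const_smul _

lemma IsTame.norm_metaGrad_le {S : Ω} (hS : IsTame E κ C S) (hκ : 0 ≤ κ) (h : V) :
    ‖metaGrad κ E h S‖ ≤ C := by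
  rw [metaGrad, neg_smul, norm_neg, norm_smul_of_nonneg hκ]
  exact hS.2 h

variable [MeasurableSpace V] [BorelSpace V] [MeasurableSpace Ω]

lemma measurable_metaGrad {h : V} (hE : Measurable (E h)) : Measurable (metaGrad κ E h) :=
  (hE.sub_const h).const_smul (-κ)

lemma integrable_inner_metaGrad [SecondCountableTopology V] {P : Measure Ω} [IsFiniteMeasure P]
    (hκ : 0 ≤ κ)
    (htame : ∀ᵐ S ∂P, IsTame E κ C S) {h : V} (hE : Measurable (E h)) (v : V) :
    Integrable (fun S => ⟪metaGrad κ E h S, v⟫_ℝ) P :=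
  (integrable_const (C * ‖v‖)).mono'
    ((measurable_metaGrad hE).aestronglyMeasurable.inner aestronglyMeasurable_const)
    (htame.mono fun S hS => (norm_inner_le_norm _ _).trans
      (by gcongr; exact hS.norm_metaGrad_le hκ h))

end MetaGradient

section TransferRisk

variable {d n : ℕ} {ℓ : ℝ → ℝ → ℝ} {L R lam : ℝ} {erm : Vec d → (Fin n → Pt d) → Vec d}

/-- The transfer risk `E_n(A)` of the algorithm `A`: its mean true risk on a task drawn from the
environment `ρ`, after training on `n` observations of that task. -/
def transferRisk {Θ : Type*} [MeasurableSpace Θ] (ℓ : ℝ → ℝ → ℝ) (ρ : Measure Θ)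
    (task : Θ → Measure (Pt d)) (A : (Fin n → Pt d) → Vec d) : ℝ :=
  ∫ θ, ∫ S, trueRisk ℓ (task θ) (A S) ∂(Measure.pi fun _ : Fin n => task θ) ∂ρ

variable (hn : 0 < n) (hL : 0 ≤ L) (hR : 0 ≤ R) (hlam : 0 < lam)
  (herm : ∀ h S, IsProx (empRisk ℓ S) lam h (erm h S))
include hn hL hR hlam herm

lemma isTame_of_isRegularPt {S : Fin n → Pt d} (hS : ∀ k, IsRegularPt ℓ L R (S k)) :
    IsTame erm lam (L * R) S := by
  have hconv := convexOn_empRisk hS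
  refine ⟨lipschitzWith_iff_norm_sub_le.2 fun a b => ?_, fun a => ?_⟩
  · rw [NNReal.coe_one, one_mul]
    exact (herm a S).norm_sub_le hconv hlam (herm b S)
  · exact (herm a S).mul_norm_sub_le hconv (by positivity) (empRisk_sub_le hS hn hL)

variable (hem : ∀ h, Measurable (erm h))
include hem

lemma ae_bind_isTame {Θ : Type*} [MeasurableSpace Θ] {ρ : Measure Θ} {task : Θ → Measure (Pt d)}
    [∀ θ, IsProbabilityMeasure (task θ)]
    (hP : AEMeasurable (fun θ => Measure.pi fun _ : Fin n => task θ) ρ)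
    (hreg : ∀ θ, ∀ᵐ z ∂(task θ), IsRegularPt ℓ L R z) :
    ∀ᵐ S ∂ρ.bind fun θ => Measure.pi fun _ : Fin n => task θ, IsTame erm lam (L * R) S :=
  ae_bind_of_ae_ae hP
    (measurableSet_isTame hem fun S a b => (herm a S).inner_sub_sub_nonneg hlam (herm b S))
    (ae_of_all _ fun θ => (ae_pi_forall (hreg θ)).mono fun _ hS =>
      isTame_of_isRegularPt hn hL hR hlam herm hS)

variable {T : ℕ} (hT : 0 < T) (u : Fin T → Vec d) (m : Vec d)
include hT

lemma integral_trueRisk_average_le {μ : Measure (Pt d)} [IsProbabilityMeasure μ]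
    (hreg : ∀ᵐ z ∂μ, IsRegularPt ℓ L R z)
    (hint : ∀ w, Integrable (fun z : Pt d => ℓ ⟪z.1, w⟫_ℝ z.2) μ) (w : Vec d) :
    ∫ S, trueRisk ℓ μ (erm ((T : ℝ)⁻¹ • ∑ t, u t) S) ∂(Measure.pi fun _ : Fin n => μ)
      ≤ trueRisk ℓ μ w + lam / 2 * ‖w - m‖ ^ 2
        + (T : ℝ)⁻¹ * ∑ t, ∫ S, ⟪metaGrad lam erm (u t) S, u t - m⟫_ℝ
            ∂(Measure.pi fun _ : Fin n => μ)
        + (L * R) ^ 2 / (n * lam) := by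
  set hbar := (T : ℝ)⁻¹ • ∑ t, u t with hbar_eq
  refine (integral_trueRisk_le_integral_regRisk_add hreg hint (hem hbar) (herm hbar) hn hL hR
    hlam).trans ?_
  gcongr
  have hemp : Integrable (fun S => empRisk ℓ S w + lam / 2 * ‖w - m‖ ^ 2)
      (Measure.pi fun _ : Fin n => μ) := (integrable_empRisk hint w).add (integrable_const _)
  have hinner (t : Fin T) := integrable_inner_metaGrad hlam.le
    ((ae_pi_forall hreg).mono fun S hS => isTame_of_isRegularPt hn hL hR hlam herm hS)
    (hem (u t)) (u t - m)
  have hregret := (integrable_finsetSum Finset.univ fun t _ => hinner t).const_mul (T : ℝ)⁻¹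
  refine (integral_mono_ae
    (integrable_regRisk_of_isProx hreg hint (hem hbar) (herm hbar) hlam.le)
    (hemp.add hregret) ((ae_pi_forall hreg).mono fun S hS => ?_)).trans_eq ?_
  · exact IsProx.average_le (convexOn_empRisk hS) hlam.le (fun h => herm h S) hT u hbar_eq m w
  · rw [integral_add' hemp hregret, integral_add (integrable_empRisk hint w) (integrable_const _),
      integral_const_mul (T : ℝ)⁻¹, integral_finsetSum _ fun t _ => hinner t,
      integral_empRisk hn hint]
    simp

variable {Θ : Type*} [MeasurableSpace Θ] {ρ : Measure Θ} [IsProbabilityMeasure ρ]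
  {task : Θ → Measure (Pt d)} [∀ θ, IsProbabilityMeasure (task θ)]
  (hP : AEMeasurable (fun θ => Measure.pi fun _ : Fin n => task θ) ρ)
  (hreg : ∀ θ, ∀ᵐ z ∂(task θ), IsRegularPt ℓ L R z)
include hP hreg

variable (hint : ∀ θ w, Integrable (fun z : Pt d => ℓ ⟪z.1, w⟫_ℝ z.2) (task θ))
  {w : Θ → Vec d} (horacle : Integrable (fun θ => trueRisk ℓ (task θ) (w θ)) ρ)
  (hvar : Integrable (fun θ => ‖w θ - m‖ ^ 2) ρ)
  (houter : ∀ h, Integrable (fun θ => ∫ S, trueRisk ℓ (task θ) (erm h S)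
    ∂(Measure.pi fun _ : Fin n => task θ)) ρ)
include hint horacle hvar houter

lemma transferRisk_average_le :
    transferRisk ℓ ρ task (erm ((T : ℝ)⁻¹ • ∑ t, u t))
      ≤ ∫ θ, trueRisk ℓ (task θ) (w θ) ∂ρ + lam / 2 * ∫ θ, ‖w θ - m‖ ^ 2 ∂ρ
        + (T : ℝ)⁻¹ * ∑ t, ∫ S, ⟪metaGrad lam erm (u t) S, u t - m⟫_ℝ
            ∂(ρ.bind fun θ => Measure.pi fun _ : Fin n => task θ)
        + (L * R) ^ 2 / (n * lam) := by
  have hprob : IsProbabilityMeasure (ρ.bind fun θ => Measure.pi fun _ : Fin n => task θ) :=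
    isProbabilityMeasure_bind hP (ae_of_all _ fun θ => inferInstance)
  have hinner (t : Fin T) := integrable_inner_metaGrad hlam.le
    (ae_bind_isTame hn hL hR hlam herm hem hP hreg) (hem (u t)) (u t - m)
  have hmean (t : Fin T) := integrable_integral_of_bind hP (hinner t)
  have hregret := (integrable_finsetSum Finset.univ fun t _ => hmean t).const_mul (T : ℝ)⁻¹
  have hpenalty := hvar.const_mul (lam / 2)
  refine (integral_mono (houter _)
    (((horacle.add hpenalty).add hregret).add (integrable_const ((L * R) ^ 2 / (n * lam))))
    fun θ => integral_trueRisk_average_le hn hL hR hlam herm hem hT u m (hreg θ) (hint θ)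
      (w θ)).trans_eq ?_
  rw [integral_add' ((horacle.add hpenalty).add hregret) (integrable_const _),
    integral_add' (horacle.add hpenalty) hregret, integral_add' horacle hpenalty,
    integral_const_mul, integral_const_mul, integral_finsetSum _ fun t _ => hmean t]
  simp only [fun t => integral_integral_of_bind hP (hinner t), integral_const, probReal_univ,
    one_smul]

variable {X : Type*} [MeasurableSpace X] {ν : Measure X} [IsProbabilityMeasure ν]
  {f : X → Fin n → Pt d}
  (hf : MeasurePreserving f ν (ρ.bind fun θ => Measure.pi fun _ : Fin n => task θ))
  {γ : ℝ} (hγ : 0 < γ) {h : (Fin T → X) → ℕ → Vec d}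
  (hh : IsSGD (fun v x => metaGrad lam erm v (f x)) γ h)
  (hmeta : Integrable (fun ω => transferRisk ℓ ρ task (erm ((T : ℝ)⁻¹ • ∑ t : Fin T, h ω t)))
    (Measure.pi fun _ : Fin T => ν))
include hf hγ hh hmeta

lemma integral_transferRisk_average_le :
    ∫ ω, transferRisk ℓ ρ task (erm ((T : ℝ)⁻¹ • ∑ t : Fin T, h ω t))
        ∂(Measure.pi fun _ : Fin T => ν)
      ≤ ∫ θ, trueRisk ℓ (task θ) (w θ) ∂ρ + lam / 2 * ∫ θ, ‖w θ - m‖ ^ 2 ∂ρ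
        + (T : ℝ)⁻¹ * (‖m‖ ^ 2 / (2 * γ) + γ * T * (L * R) ^ 2 / 2)
        + (L * R) ^ 2 / (n * lam) := by
  have htame := hf.quasiMeasurePreserving.ae
    (ae_bind_isTame hn hL hR hlam herm hem hP hreg)
  have hgrad (v : Vec d) : AEStronglyMeasurable (fun x => metaGrad lam erm v (f x)) ν :=
    ((measurable_metaGrad (hem v)).comp hf.measurable).aestronglyMeasurable
  have hcont := htame.mono fun x hx => hx.continuous_metaGrad
  have hbound := htame.mono fun x hx v => hx.norm_metaGrad_le hlam.le v
  have hregret := (hh.integrable_sum_integral_inner hgrad hcont hbound m hγ.le).const_mul (T : ℝ)⁻¹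
  have hpullback (v : Vec d) : ∫ S, ⟪metaGrad lam erm v S, v - m⟫_ℝ
        ∂(ρ.bind fun θ => Measure.pi fun _ : Fin n => task θ)
      = ∫ x, ⟪metaGrad lam erm v (f x), v - m⟫_ℝ ∂ν :=
    (integral_comp_of_measurePreserving hf
      ((measurable_metaGrad (hem v)).inner_const).aestronglyMeasurable).symm
  have hpointwise (ω : Fin T → X) :=
    transferRisk_average_le hn hL hR hlam herm hem hT (fun t => h ω t) m hP hreg hint horacle hvar
      houter
  simp only [hpullback] at hpointwise
  refine (integral_mono hmeta (((integrable_const _).add hregret).add (integrable_const _))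
    hpointwise).trans ?_
  rw [integral_add' ((integrable_const _).add hregret) (integrable_const _),
    integral_add' (integrable_const _) hregret, integral_const_mul]
  simp only [integral_const, probReal_univ, one_smul]
  gcongr
  exact hh.integral_sum_integral_inner_le hgrad hcont hbound m hγ

end TransferRisk

section Tuning

variable {n T : ℕ} {L R lam γ : ℝ}

lemma regularization_add_stability_eq (hn : 0 < n) (hL : 0 < L) (hR : 0 < R) {σ : ℝ} (hσ : 0 < σ)
    (hlam : lam = R * L / (σ * √n)) :
    lam / 2 * (2 * σ ^ 2) + (L * R) ^ 2 / (n * lam) = σ * (2 * R * L) * (√n)⁻¹ := by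
  have hsqrt : √(n : ℝ) ^ 2 = n := Real.sq_sqrt n.cast_nonneg
  have : 0 < √(n : ℝ) := by positivity
  rw [hlam, ← hsqrt, Real.sqrt_sq this.le]
  field

lemma average_regret_eq (hT : 0 < T) (hL : 0 < L) (hR : 0 < R) {D : ℝ} (hD : 0 < D)
    (hγ : γ = D / (L * R * √T)) :
    (T : ℝ)⁻¹ * (D ^ 2 / (2 * γ) + γ * T * (L * R) ^ 2 / 2) = D * (L * R) * (√T)⁻¹ := by
  have hsqrt : √(T : ℝ) ^ 2 = T := Real.sq_sqrt T.cast_nonneg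
  have : 0 < √(T : ℝ) := by positivity
  rw [hγ, ← hsqrt, Real.sqrt_sq this.le]
  field

end Tuning

lemma ae_isRegularPt {d : ℕ} {R L : ℝ} {Y : Set ℝ} {ℓ : ℝ → ℝ → ℝ} {μ : Measure (Pt d)}
    (hℓ0 : ∀ a y, y ∈ Y → 0 ≤ ℓ a y) (hℓconv : ∀ y ∈ Y, ConvexOn ℝ Set.univ fun a => ℓ a y)
    (hℓlip : ∀ y ∈ Y, ∀ a b, |ℓ a y - ℓ b y| ≤ L * |a - b|) (hY : ∀ᵐ z ∂μ, z.2 ∈ Y)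
    (hR : ∀ᵐ z ∂μ, ‖z.1‖ ≤ R) : ∀ᵐ z ∂μ, IsRegularPt ℓ L R z := by
  filter_upwards [hY, hR] with z hzY hzR
  exact ⟨hzR, fun a => hℓ0 a _ hzY, hℓconv _ hzY, hℓlip _ hzY⟩

theorem stmt19_general {d n T : ℕ} (hn : 0 < n) (hT : 0 < T) {R L : ℝ} (hR : 0 < R) (hL : 0 < L)
    {ℓ : ℝ → ℝ → ℝ} {Θ : Type*} [MeasurableSpace Θ] {ρ : Measure Θ} [IsProbabilityMeasure ρ]
    {task : Θ → Measure (Pt d)} [∀ θ, IsProbabilityMeasure (task θ)]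
    (hreg : ∀ θ, ∀ᵐ z ∂(task θ), IsRegularPt ℓ L R z)
    (hint : ∀ θ w, Integrable (fun z : Pt d => ℓ ⟪z.1, w⟫_ℝ z.2) (task θ))
    {w : Θ → Vec d} (horacle : Integrable (fun θ => trueRisk ℓ (task θ) (w θ)) ρ)
    {m : Vec d} (hm : m ≠ 0) (hvar : Integrable (fun θ => ‖w θ - m‖ ^ 2) ρ)
    {σ : ℝ} (hσ : 0 < σ) (hσ_eq : σ ^ 2 = 1 / 2 * ∫ θ, ‖w θ - m‖ ^ 2 ∂ρ)
    {lam γ : ℝ} (hlam : lam = R * L / (σ * √n)) (hγ : γ = ‖m‖ / (L * R * √T))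
    {erm : Vec d → (Fin n → Pt d) → Vec d} (hem : ∀ h, Measurable (erm h))
    (herm : ∀ h S, IsProx (empRisk ℓ S) lam h (erm h S))
    (houter : ∀ h, Integrable (fun θ => ∫ S, trueRisk ℓ (task θ) (erm h S)
      ∂(Measure.pi fun _ : Fin n => task θ)) ρ)
    {ν : Measure (Θ × (Fin n → Pt d))} [IsProbabilityMeasure ν]
    (hν : ν = ρ.bind fun θ => (Measure.dirac θ).prod (Measure.pi fun _ : Fin n => task θ))
    {h : (Fin T → Θ × (Fin n → Pt d)) → ℕ → Vec d}
    (hh : IsSGD (fun v x => metaGrad lam erm v x.2) γ h)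
    (hmeta : Integrable (fun ω => transferRisk ℓ ρ task (erm ((T : ℝ)⁻¹ • ∑ t : Fin T, h ω t)))
      (Measure.pi fun _ : Fin T => ν)) :
    ∫ ω, transferRisk ℓ ρ task (erm ((T : ℝ)⁻¹ • ∑ t : Fin T, h ω t))
        ∂(Measure.pi fun _ : Fin T => ν) - ∫ θ, trueRisk ℓ (task θ) (w θ) ∂ρ
      ≤ σ * (2 * R * L) * (√n)⁻¹ + ‖m‖ * (L * R) * (√T)⁻¹ := by
  have hsnd : MeasurePreserving Prod.snd ν
      (ρ.bind fun θ => Measure.pi fun _ : Fin n => task θ) :=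
    hν ▸ measurePreserving_snd_bind_dirac_prod
      (aemeasurable_of_bind_ne_zero (hν ▸ IsProbabilityMeasure.ne_zero ν))
  have hprob : IsProbabilityMeasure (ρ.bind fun θ => Measure.pi fun _ : Fin n => task θ) :=
    hsnd.map_eq ▸ Measure.isProbabilityMeasure_map hsnd.aemeasurable
  have hP := aemeasurable_of_bind_ne_zero hprob.ne_zero
  have hm0 : 0 < ‖m‖ := norm_pos_iff.2 hm
  have hrisk := integral_transferRisk_average_le hn hL.le hR.le (hlam ▸ by positivity) herm hem hT
    m hP hreg hint horacle hvar houter hsnd (hγ ▸ by positivity) hh hmeta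
  have hdeviation : ∫ θ, ‖w θ - m‖ ^ 2 ∂ρ = 2 * σ ^ 2 := by linarith
  have hstability := regularization_add_stability_eq hn hL hR hσ hlam
  rw [average_regret_eq hT hL hR hm0 hγ, hdeviation] at hrisk
  linarith

/-- Excess transfer risk for the bias estimated by exact-gradient
meta-SGD, for the biased ERM family: with `γ = ‖m‖/(LR√T)` and `λ = RL/(Var_m√n)`,
`E[E_n(w_{h̄_T})] - E_ρ ≤ 2RL·Var_m·n^{-1/2} + ‖m‖LR·T^{-1/2}`. -/
theorem stmt19
    (d n T : ℕ) (hd : 1 ≤ d) (hn : 1 ≤ n) (hT : 1 ≤ T)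
    (R L : ℝ) (hR : 0 < R) (hL : 0 < L)
    (Y : Set ℝ) (ℓ : ℝ → ℝ → ℝ)
    (hℓ0 : ∀ a y, y ∈ Y → 0 ≤ ℓ a y)
    (hℓconv : ∀ y ∈ Y, ConvexOn ℝ Set.univ fun a => ℓ a y)
    (hℓlip : ∀ y ∈ Y, ∀ a b, |ℓ a y - ℓ b y| ≤ L * |a - b|)
    -- the environment of tasks
    (Θ : Type*) [MeasurableSpace Θ]
    (ρ : Measure Θ) [IsProbabilityMeasure ρ]
    (task : Θ → Measure (Pt d))
    (htaskprob : ∀ θ, IsProbabilityMeasure (task θ))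
    [hsig : ∀ θ, SigmaFinite (task θ)]
    (htaskY : ∀ θ, ∀ᵐ z ∂(task θ), z.2 ∈ Y)
    (htaskR : ∀ θ, ∀ᵐ z ∂(task θ), ‖z.1‖ ≤ R)
    (hlossInt : ∀ θ w, Integrable (fun z : Pt d => ℓ (⟪z.1, w⟫_ℝ) (z.2)) (task θ))
    -- each task has a minimal-norm minimizer of the true risk
    (wstar : Θ → Vec d)
    (hwmin : ∀ θ w, trueRisk ℓ (task θ) (wstar θ) ≤ trueRisk ℓ (task θ) w)
    (hwnorm : ∀ θ w, trueRisk ℓ (task θ) w = trueRisk ℓ (task θ) (wstar θ) →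
      ‖wstar θ‖ ≤ ‖w‖)
    (hwInt : Integrable wstar ρ)
    -- the mean of the tasks' weight vectors and its variance
    (m : Vec d) (hm : m = ∫ θ, wstar θ ∂ρ) (hm0 : m ≠ 0)
    (Varm : ℝ) (hVarpos : 0 < Varm)
    (hVarInt : Integrable (fun θ => ‖wstar θ - m‖ ^ 2) ρ)
    (hVar : Varm ^ 2 = 1 / 2 * ∫ θ, ‖wstar θ - m‖ ^ 2 ∂ρ)
    -- regularization parameter and meta step size
    (lam γ : ℝ)
    (hlam : lam = R * L / (Varm * Real.sqrt n))
    (hγ : γ = ‖m‖ / (L * R * Real.sqrt T))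
    -- the biased ERM, as a function of the bias, assumed measurable in the data
    (erm : Vec d → (Fin n → Pt d) → Vec d)
    (hermmeas : ∀ h, Measurable (erm h))
    (herm : ∀ h S w, regRisk ℓ lam S h (erm h S) ≤ regRisk ℓ lam S h w)
    -- the joint distribution of one (task, dataset) observation
    (ν : Measure (Θ × (Fin n → Pt d))) [IsProbabilityMeasure ν]
    (hν : ν = ρ.bind fun θ =>
      (Measure.dirac θ).prod (Measure.pi fun _ : Fin n => task θ))
    -- exact-gradient meta-SGD
    (H : (Fin T → Θ × (Fin n → Pt d)) → ℕ → Vec d)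
    (hH1 : ∀ ω, H ω 1 = 0)
    (hHrec : ∀ ω (t : Fin T), H ω (t.1 + 2)
      = H ω (t.1 + 1) - γ •
          ((-lam) • (erm (H ω (t.1 + 1)) (ω t).2 - H ω (t.1 + 1))))
    -- integrability of all integrands involved
    (hIntInner : ∀ (h : Vec d) θ, Integrable
      (fun S => trueRisk ℓ (task θ) (erm h S))
      (Measure.pi fun _ : Fin n => task θ))
    (hIntOuter : ∀ h : Vec d, Integrable (fun θ =>
      ∫ S, trueRisk ℓ (task θ) (erm h S)
        ∂(Measure.pi fun _ : Fin n => task θ)) ρ)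
    (hIntMeta : Integrable (fun ω =>
      ∫ θ, (∫ S, trueRisk ℓ (task θ)
          (erm ((T : ℝ)⁻¹ • ∑ t : Fin T, H ω (t.1 + 1)) S)
        ∂(Measure.pi fun _ : Fin n => task θ)) ∂ρ)
      (Measure.pi fun _ : Fin T => ν))
    (hIntOracle : Integrable (fun θ => trueRisk ℓ (task θ) (wstar θ)) ρ) :
    (∫ ω, (∫ θ, (∫ S, trueRisk ℓ (task θ)
          (erm ((T : ℝ)⁻¹ • ∑ t : Fin T, H ω (t.1 + 1)) S)
        ∂(Measure.pi fun _ : Fin n => task θ)) ∂ρ)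
      ∂(Measure.pi fun _ : Fin T => ν))
      - (∫ θ, trueRisk ℓ (task θ) (wstar θ) ∂ρ)
      ≤ Varm * (2 * R * L) * (Real.sqrt n)⁻¹
        + ‖m‖ * (L * R) * (Real.sqrt T)⁻¹ := by
  exact stmt19_general hn hT hR hL
    (fun θ => ae_isRegularPt hℓ0 hℓconv hℓlip (htaskY θ) (htaskR θ)) hlossInt hIntOracle hm0
    hVarInt hVarpos hVar hlam hγ hermmeas herm hIntOuter hν
    (h := fun ω t => H ω (t + 1)) ⟨hH1, hHrec⟩ hIntMeta
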